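/- Let (A, {Δ(λ)}) be a split quasi-hereditary algebra over a commutative Noetherian ring R. For each M ∈ F(Δ̃) there exists a partial tilting module T_M (i.e., T_M ∈ F(Δ̃) ∩ F(∇̃)) and a monomorphism i_M : M → T_M whose cokernel lies in F(Δ), the category of modules filtered by standard modules. -/

import Mathlib

open scoped TensorProduct
open CategoryTheory

noncomputable section

section Core

variable (R : Type) [CommRing R] (A : Type) [Ring A] [Algebra R A]

/-- The action of `a : A` on an `A`-module as an `R`-linear endomorphism. -/
def actL (M : Type) [AddCommGroup M] [Module R M] [Module A M] [IsScalarTower R A M]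
    (a : A) : M →ₗ[R] M where
  toFun m := a • m
  map_add' := smul_add a
  map_smul' r m := (smul_comm r a m).symm

/-- The right `A`-module (i.e. `Aᵐᵒᵖ`-module) structure on the `R`-linear dual of a left
`A`-module `M`, given by `(aᵒᵖ • f) m = f (a • m)`. -/
instance dualModule (M : Type) [AddCommGroup M] [Module R M] [Module A M]
    [IsScalarTower R A M] : Module Aᵐᵒᵖ (M →ₗ[R] R) where
  smul a f := f.comp (actL R A M a.unop)
  one_smul f := by ext m; show f ((1 : Aᵐᵒᵖ).unop • m) = f m; simp
  mul_smul a b f := by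
    ext m
    show f ((a * b).unop • m) = f (b.unop • a.unop • m)
    simp [mul_smul]
  smul_zero a := rfl
  smul_add a f g := rfl
  add_smul a b f := by
    ext m
    show f ((a + b).unop • m) = f (a.unop • m) + f (b.unop • m)
    simp [add_smul]
  zero_smul f := by ext m; show f ((0 : Aᵐᵒᵖ).unop • m) = 0; simp

@[simp] lemma dualModule_smul_apply (M : Type) [AddCommGroup M] [Module R M] [Module A M]
    [IsScalarTower R A M] (a : Aᵐᵒᵖ) (f : M →ₗ[R] R) (m : M) :
    (a • f) m = f (a.unop • m) := rfl

instance dualTower (M : Type) [AddCommGroup M] [Module R M] [Module A M]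
    [IsScalarTower R A M] : IsScalarTower R Aᵐᵒᵖ (M →ₗ[R] R) := by
  constructor
  intro r a f
  ext m
  show f ((r • a).unop • m) = r • f (a.unop • m)
  rw [MulOpposite.unop_smul, smul_assoc, map_smul]

/-- The left `A`-module structure on the `R`-linear dual of a right `A`-module
(i.e. an `Aᵐᵒᵖ`-module) `M`, given by `(a • f) m = f (aᵒᵖ • m)`. -/
instance dualModule' (M : Type) [AddCommGroup M] [Module R M] [Module Aᵐᵒᵖ M]
    [IsScalarTower R Aᵐᵒᵖ M] : Module A (M →ₗ[R] R) where
  smul a f := f.comp (actL R Aᵐᵒᵖ M (MulOpposite.op a))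
  one_smul f := by ext m; show f (MulOpposite.op (1 : A) • m) = f m; simp
  mul_smul a b f := by
    ext m
    show f (MulOpposite.op (a * b) • m) = f (MulOpposite.op b • MulOpposite.op a • m)
    rw [MulOpposite.op_mul, mul_smul]
  smul_zero a := rfl
  smul_add a f g := rfl
  add_smul a b f := by
    ext m
    show f (MulOpposite.op (a + b) • m) = f (MulOpposite.op a • m) + f (MulOpposite.op b • m)
    rw [MulOpposite.op_add, add_smul, map_add]
  zero_smul f := by ext m; show f (MulOpposite.op (0 : A) • m) = 0; simp

@[simp] lemma dualModule'_smul_apply (M : Type) [AddCommGroup M] [Module R M] [Module Aᵐᵒᵖ M]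
    [IsScalarTower R Aᵐᵒᵖ M] (a : A) (f : M →ₗ[R] R) (m : M) :
    (a • f) m = f (MulOpposite.op a • m) := rfl

instance dualTower' (M : Type) [AddCommGroup M] [Module R M] [Module Aᵐᵒᵖ M]
    [IsScalarTower R Aᵐᵒᵖ M] : IsScalarTower R A (M →ₗ[R] R) := by
  constructor
  intro r a f
  ext m
  show f (MulOpposite.op (r • a) • m) = r • f (MulOpposite.op a • m)
  rw [MulOpposite.op_smul, smul_assoc, map_smul]

variable (Λ : Type) [Fintype Λ] [PartialOrder Λ]

/-- Data witnessing that `X` is isomorphic to `Δ(λ) ⊗_R U` for some `λ ∈ S` and some finitely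
generated projective `R`-module `U`. -/
structure TensorFactor (Δ : Λ → Type) [∀ l, AddCommGroup (Δ l)] [∀ l, Module R (Δ l)]
    [∀ l, Module A (Δ l)] [∀ l, IsScalarTower R A (Δ l)]
    (S : Set Λ) (X : Type) [AddCommGroup X] [Module A X] : Type 1 where
  lam : Λ
  mem : lam ∈ S
  U : ModuleCat.{0} R
  fin : Module.Finite R U
  proj : Module.Projective R U
  iso : X ≃ₗ[A] (TensorProduct R (Δ lam) U)

/-- `M` belongs to `F(Δ̃_S)`: it is a finitely generated `A`-module with a finite filtration
whose factors are of the form `Δ(λ) ⊗_R U`, `λ ∈ S`, `U` a finitely generated projective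
`R`-module. -/
def InFilt (Δ : Λ → Type) [∀ l, AddCommGroup (Δ l)] [∀ l, Module R (Δ l)]
    [∀ l, Module A (Δ l)] [∀ l, IsScalarTower R A (Δ l)]
    (S : Set Λ) (M : Type) [AddCommGroup M] [Module A M] : Prop :=
  Module.Finite A M ∧
  ∃ (n : ℕ) (c : Fin (n + 1) → Submodule A M), c 0 = ⊥ ∧ c (Fin.last n) = ⊤ ∧ Monotone c ∧
    ∀ i : Fin n, Nonempty (TensorFactor R A Λ Δ S
      (↥(c i.succ) ⧸ (Submodule.comap (c i.succ).subtype (c i.castSucc))))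

/-- Data witnessing that `X` is isomorphic to `F(λ)` for some `λ ∈ S`. -/
structure PlainFactor (F : Λ → Type) [∀ l, AddCommGroup (F l)] [∀ l, Module A (F l)]
    (S : Set Λ) (X : Type) [AddCommGroup X] [Module A X] : Type 1 where
  lam : Λ
  mem : lam ∈ S
  iso : X ≃ₗ[A] F lam

/-- `M` has a finite filtration with factors among the modules `F(λ)`, `λ ∈ S`. -/
def InFiltPlain (F : Λ → Type) [∀ l, AddCommGroup (F l)] [∀ l, Module A (F l)]
    (S : Set Λ) (M : Type) [AddCommGroup M] [Module A M] : Prop :=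
  Module.Finite A M ∧
  ∃ (n : ℕ) (c : Fin (n + 1) → Submodule A M), c 0 = ⊥ ∧ c (Fin.last n) = ⊤ ∧ Monotone c ∧
    ∀ i : Fin n, Nonempty (PlainFactor A Λ F S
      (↥(c i.succ) ⧸ (Submodule.comap (c i.succ).subtype (c i.castSucc))))

/-- `X` is a direct summand of `Y` (as `A`-modules). -/
def IsDirectSummand (X Y : Type) [AddCommGroup X] [Module A X] [AddCommGroup Y]
    [Module A Y] : Prop :=
  ∃ (i : X →ₗ[A] Y) (p : Y →ₗ[A] X), p.comp i = LinearMap.id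

/-- `X` belongs to the additive closure `add T`. -/
def InAdd (T : Type) [AddCommGroup T] [Module A T] (X : Type) [AddCommGroup X]
    [Module A X] : Prop :=
  ∃ n : ℕ, IsDirectSummand A X (Fin n → T)

/-- A split quasi-hereditary structure on the `R`-algebra `A` with standard modules
`Δ(λ)`, `λ ∈ Λ` (following Rouquier's module-theoretic definition). -/
structure SplitQH (Δ : Λ → Type) [∀ l, AddCommGroup (Δ l)] [∀ l, Module R (Δ l)]
    [∀ l, Module A (Δ l)] [∀ l, IsScalarTower R A (Δ l)] : Type 1 where
  algFin : Module.Finite R A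
  algProj : Module.Projective R A
  deltaFinA : ∀ l, Module.Finite A (Δ l)
  deltaFinR : ∀ l, Module.Finite R (Δ l)
  deltaProjR : ∀ l, Module.Projective R (Δ l)
  hom_le : ∀ l m : Λ, (∃ f : Δ l →ₗ[A] Δ m, f ≠ 0) → l ≤ m
  endIso : ∀ l, Nonempty ((Module.End A (Δ l)) ≃ₐ[R] R)
  P : Λ → ModuleCat.{0} A
  P_proj : ∀ l, Module.Projective A (P l)
  P_fin : ∀ l, Module.Finite A (P l)
  epi : ∀ l, (P l : Type) →ₗ[A] Δ l
  epi_surj : ∀ l, Function.Surjective (epi l)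
  ker_filt : ∀ l, InFilt R A Λ Δ {m | l < m} ↥(LinearMap.ker (epi l))
  add_gen : ∀ (Q : ModuleCat.{0} A), Module.Finite A Q → Module.Projective A Q →
    InAdd A (∀ l, (P l : Type)) Q

/-- Vanishing of `Ext^i_A(M, N)` (computed in the abelian category of `A`-modules). -/
def extVanish (M : Type) [AddCommGroup M] [Module A M] (N : Type) [AddCommGroup N]
    [Module A N] (i : ℕ) : Prop :=
  Subsingleton (((Ext ℤ (ModuleCat.{0} A) i).obj
    (Opposite.op (ModuleCat.of A M))).obj (ModuleCat.of A N))

/-- `∇` is a family of costandard modules for the split quasi-hereditary algebra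
`(A, {Δ(λ)})`: the `R`-linear duals `D∇(λ)` make `A^op` split quasi-hereditary (with the same
poset), and the `Ext`-orthogonality relations with the standard modules hold. -/
def IsCostandard (Δ : Λ → Type) [∀ l, AddCommGroup (Δ l)] [∀ l, Module R (Δ l)]
    [∀ l, Module A (Δ l)] [∀ l, IsScalarTower R A (Δ l)]
    (N : Λ → Type) [∀ l, AddCommGroup (N l)] [∀ l, Module R (N l)]
    [∀ l, Module A (N l)] [∀ l, IsScalarTower R A (N l)] : Prop :=
  Nonempty (SplitQH R Aᵐᵒᵖ Λ (fun l => (N l →ₗ[R] R))) ∧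
  (∀ l, Nonempty ((Δ l →ₗ[A] N l) ≃ₗ[R] R)) ∧
  (∀ l m, l ≠ m → ∀ f : Δ l →ₗ[A] N m, f = 0) ∧
  (∀ l m : Λ, ∀ i : ℕ, 0 < i → extVanish A (Δ l) (N m) i)

/-- A bundled family of costandard modules. -/
structure CostandardFamily (Δ : Λ → Type) [∀ l, AddCommGroup (Δ l)] [∀ l, Module R (Δ l)]
    [∀ l, Module A (Δ l)] [∀ l, IsScalarTower R A (Δ l)] : Type 1 where
  Nab : Λ → Type
  [acg : ∀ l, AddCommGroup (Nab l)]
  [modR : ∀ l, Module R (Nab l)]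
  [modA : ∀ l, Module A (Nab l)]
  [tower : ∀ l, IsScalarTower R A (Nab l)]
  cost : IsCostandard R A Λ Δ Nab

attribute [instance] CostandardFamily.acg CostandardFamily.modR CostandardFamily.modA
  CostandardFamily.tower

/-- `T` is a family of (partial) tilting modules forming a characteristic tilting module
`⊕ T(λ)`: each `T(λ)` admits an exact sequence `0 → Δ(λ) → T(λ) → X(λ) → 0` with
`X(λ) ∈ F(Δ̃_{μ<λ})` and an exact sequence `0 → Y(λ) → T(λ) → ∇(λ) → 0` with
`Y(λ) ∈ F(∇̃_{μ<λ})`. -/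
def IsCharTilting (Δ : Λ → Type) [∀ l, AddCommGroup (Δ l)] [∀ l, Module R (Δ l)]
    [∀ l, Module A (Δ l)] [∀ l, IsScalarTower R A (Δ l)]
    (N : Λ → Type) [∀ l, AddCommGroup (N l)] [∀ l, Module R (N l)]
    [∀ l, Module A (N l)] [∀ l, IsScalarTower R A (N l)]
    (T : Λ → Type) [∀ l, AddCommGroup (T l)] [∀ l, Module A (T l)] : Prop :=
  ∀ l : Λ,
    (∃ f : Δ l →ₗ[A] T l, Function.Injective f ∧
      InFilt R A Λ Δ {m | m < l} ((T l) ⧸ LinearMap.range f)) ∧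
    (∃ g : T l →ₗ[A] N l, Function.Surjective g ∧
      InFilt R A Λ N {m | m < l} ↥(LinearMap.ker g))

end Core

end

section Generic

variable {A : Type} [Ring A]

/-- The pair of linear maps `f`, `g` forms a short exact sequence. -/
structure IsSES {X' X X'' : Type} [AddCommGroup X'] [Module A X'] [AddCommGroup X] [Module A X]
    [AddCommGroup X''] [Module A X''] (f : X' →ₗ[A] X) (g : X →ₗ[A] X'') : Prop where
  inj : Function.Injective f
  surj : Function.Surjective g
  exact : Function.Exact f g

namespace IsSES

variable {X' X X'' Y : Type} [AddCommGroup X'] [Module A X'] [AddCommGroup X] [Module A X]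
  [AddCommGroup X''] [Module A X''] [AddCommGroup Y] [Module A Y]

lemma ker_subtype (g : X →ₗ[A] X'') (hg : Function.Surjective g) :
    IsSES (LinearMap.ker g).subtype g :=
  ⟨Subtype.val_injective, hg, fun x => by simp⟩

lemma range_mkQ (f : X' →ₗ[A] X) (hf : Function.Injective f) :
    IsSES f (LinearMap.range f).mkQ :=
  ⟨hf, Submodule.mkQ_surjective _, fun x => by simp⟩

lemma apply_apply {f : X' →ₗ[A] X} {g : X →ₗ[A] X''} (h : IsSES f g) (x : X') : g (f x) = 0 :=
  h.exact.apply_apply_eq_zero x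

lemma exists_lift {f : X' →ₗ[A] X} {g : X →ₗ[A] X''} (h : IsSES f g) (u : Y →ₗ[A] X)
    (hu : ∀ y, g (u y) = 0) : ∃ v : Y →ₗ[A] X', ∀ y, f (v y) = u y := by
  refine ⟨(LinearEquiv.ofInjective f h.inj).symm.toLinearMap ∘ₗ
    u.codRestrict (LinearMap.range f) fun y => (h.exact _).1 (hu y), fun y => ?_⟩
  have := (LinearEquiv.ofInjective f h.inj).apply_symm_apply
    (u.codRestrict (LinearMap.range f) (fun y => (h.exact _).1 (hu y)) y)
  exact congrArg Subtype.val this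

end IsSES

variable {B C P Q X Y : Type} [AddCommGroup B] [Module A B] [AddCommGroup C] [Module A C]
  [AddCommGroup P] [Module A P] [AddCommGroup Q] [Module A Q]
  [AddCommGroup X] [Module A X] [AddCommGroup Y] [Module A Y]

lemma LinearMap.exists_factor_of_surjective (s : C →ₗ[A] Q) (hs : Function.Surjective s)
    (m : C →ₗ[A] X) (hm : ∀ c, s c = 0 → m c = 0) : ∃ k : Q →ₗ[A] X, ∀ c, k (s c) = m c := by
  refine ⟨(LinearMap.ker s).liftQ m (fun c hc => hm c hc) ∘ₗ
    (s.quotKerEquivOfSurjective hs).symm.toLinearMap, fun c => ?_⟩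
  have : (s.quotKerEquivOfSurjective hs).symm (s c) = Submodule.Quotient.mk c := by
    rw [LinearEquiv.symm_apply_eq]; rfl
  rw [LinearMap.comp_apply, LinearEquiv.coe_coe, this]
  rfl

lemma LinearMap.exists_lift_of_projective [Module.Projective A P] (g : X →ₗ[A] Y)
    (hg : Function.Surjective g) (u : P →ₗ[A] Y) : ∃ v : P →ₗ[A] X, ∀ p, g (v p) = u p := by
  obtain ⟨v, hv⟩ := Module.projective_lifting_property g u hg
  exact ⟨v, fun p => by rw [← hv]; rfl⟩

lemma exists_finite_dual_basis {R : Type} [Ring R] (U : Type) [AddCommGroup U] [Module R U]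
    [Module.Finite R U] [Module.Projective R U] : ∃ (n : ℕ) (b : Fin n → U) (s : Fin n → U →ₗ[R] R),
      ∀ u, ∑ j, s j u • b j = u := by
  obtain ⟨n, f, hf⟩ := Module.Finite.exists_fin' R U
  obtain ⟨s, hs⟩ := LinearMap.exists_lift_of_projective f hf LinearMap.id
  refine ⟨n, fun j => f (Pi.single j 1), fun j => LinearMap.proj j ∘ₗ s, fun u => ?_⟩
  conv_rhs => rw [← LinearMap.id_apply (R := R) u, ← hs u, pi_eq_sum_univ' (s u), map_sum]
  refine Finset.sum_congr rfl fun j _ => ?_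
  rw [map_smul]
  congr 2

lemma exists_projective_presentation (Q : Type) [AddCommGroup Q] [Module A Q] :
    ∃ (F : Type) (_ : AddCommGroup F) (_ : Module A F) (_ : Module.Projective A F)
      (π : F →ₗ[A] Q), Function.Surjective π :=
  ⟨Q →₀ A, inferInstance, inferInstance, inferInstance, Finsupp.linearCombination A id,
    Finsupp.linearCombination_id_surjective A Q⟩

/-- `Ext¹(Q, X) = 0`, phrased as an extension property for maps into `X`. -/
def ExtOneZero (A : Type) [Ring A] (X : Type) [AddCommGroup X] [Module A X]
    (Q : Type) [AddCommGroup Q] [Module A Q] : Prop :=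
  ∀ (B C : Type) [AddCommGroup B] [Module A B] [AddCommGroup C] [Module A C]
    (i : B →ₗ[A] C) (q : C →ₗ[A] Q), IsSES i q →
    ∀ g : B →ₗ[A] X, ∃ k : C →ₗ[A] X, ∀ b, k (i b) = g b

lemma ExtOneZero.of_presentation [Module.Projective A P] (π : P →ₗ[A] Q)
    (hπ : Function.Surjective π)
    (H : ∀ g : LinearMap.ker π →ₗ[A] X, ∃ k : P →ₗ[A] X, ∀ b : LinearMap.ker π, k b = g b) :
    ExtOneZero A X Q := by
  intro B C _ _ _ _ i q hiq g
  obtain ⟨l, hl⟩ := LinearMap.exists_lift_of_projective q hiq.surj π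
  obtain ⟨κ, hκ⟩ := hiq.exists_lift (l ∘ₗ (LinearMap.ker π).subtype)
    (fun y => by simp [hl])
  obtain ⟨k, hk⟩ := H (g ∘ₗ κ)
  obtain ⟨m, hm⟩ := LinearMap.exists_factor_of_surjective (i.coprod l)
    (fun c => by
      obtain ⟨p, hp⟩ := hπ (q c)
      obtain ⟨b, hb⟩ := (hiq.exact (c - l p)).1 (by simp [hl, hp])
      exact ⟨(b, p), by simp [hb]⟩) (g.coprod k)
    (fun ⟨b, p⟩ hbp => by
      simp only [LinearMap.coprod_apply] at hbp ⊢
      have hp : π p = 0 := by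
        have := congrArg q hbp
        simpa [hiq.apply_apply, hl] using this
      have h1 : κ ⟨p, hp⟩ = -b := hiq.inj (by
        rw [hκ, map_neg]; simp only [LinearMap.comp_apply, Submodule.subtype_apply]
        exact (neg_eq_of_add_eq_zero_right hbp).symm)
      have h2 := hk ⟨p, hp⟩
      simp only [LinearMap.comp_apply, h1, map_neg] at h2
      rw [h2]; simp)
  exact ⟨m, fun b => by simpa using hm (b, 0)⟩

lemma ExtOneZero.of_projective [Module.Projective A P] : ExtOneZero A X P :=
  .of_presentation LinearMap.id Function.surjective_id fun g => ⟨0, fun b => by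
    obtain ⟨b, hb⟩ := b
    obtain rfl : b = 0 := hb
    exact (map_zero g).symm⟩

lemma ExtOneZero.exists_extend {π : C →ₗ[A] Q} (h : ExtOneZero A X Q)
    (hπ : Function.Surjective π) (g : LinearMap.ker π →ₗ[A] X) :
    ∃ k : C →ₗ[A] X, ∀ b : LinearMap.ker π, k b = g b :=
  h _ _ _ _ (IsSES.ker_subtype π hπ) g

lemma ExtOneZero.exists_lift {X' : Type} [AddCommGroup X'] [Module A X'] {f : X' →ₗ[A] X}
    {g : X →ₗ[A] Y} (hfg : IsSES f g) (h : ExtOneZero A X' Q) (u : Q →ₗ[A] Y) :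
    ∃ v : Q →ₗ[A] X, ∀ x, g (v x) = u x := by
  obtain ⟨F, _, _, _, π, hπ⟩ := exists_projective_presentation (A := A) Q
  obtain ⟨l, hl⟩ := LinearMap.exists_lift_of_projective g hfg.surj (u ∘ₗ π)
  obtain ⟨κ, hκ⟩ := hfg.exists_lift (l ∘ₗ (LinearMap.ker π).subtype) (fun y => by simp [hl])
  obtain ⟨k, hk⟩ := h.exists_extend hπ κ
  obtain ⟨v, hv⟩ := LinearMap.exists_factor_of_surjective π hπ (l - f ∘ₗ k) (fun c hc => by
    have h1 := hk ⟨c, hc⟩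
    have h2 := hκ ⟨c, hc⟩
    simp only [LinearMap.sub_apply, LinearMap.comp_apply] at h1 h2 ⊢
    rw [h1, h2]; simp)
  refine ⟨v, fun x => ?_⟩
  obtain ⟨c, rfl⟩ := hπ x
  rw [hv]
  simp [hl, hfg.apply_apply]

lemma ExtOneZero.of_ses_left {X' : Type} [AddCommGroup X'] [Module A X'] {f : X' →ₗ[A] X}
    {g : X →ₗ[A] Y} (hfg : IsSES f g) (h : ExtOneZero A X Q)
    (hs : ∀ u : Q →ₗ[A] Y, ∃ v : Q →ₗ[A] X, ∀ x, g (v x) = u x) :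
    ExtOneZero A X' Q := by
  intro B C _ _ _ _ i q hiq m
  obtain ⟨k, hk⟩ := h B C i q hiq (f ∘ₗ m)
  obtain ⟨u, hu⟩ := LinearMap.exists_factor_of_surjective q hiq.surj (g ∘ₗ k) (fun c hc => by
    obtain ⟨b, rfl⟩ := (hiq.exact c).1 hc
    simp [hk, hfg.apply_apply])
  obtain ⟨v, hv⟩ := hs u
  obtain ⟨w, hw⟩ := hfg.exists_lift (k - v ∘ₗ q) (fun y => by simp [hv, hu])
  exact ⟨w, fun b => hfg.inj (by simp [hw, hk, hiq.apply_apply])⟩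

lemma ExtOneZero.of_ses {X' : Type} [AddCommGroup X'] [Module A X'] {f : X' →ₗ[A] X}
    {g : X →ₗ[A] Y} (hfg : IsSES f g) (h' : ExtOneZero A X' Q) (h'' : ExtOneZero A Y Q) :
    ExtOneZero A X Q := by
  obtain ⟨F, _, _, _, π, hπ⟩ := exists_projective_presentation (A := A) Q
  refine .of_presentation π hπ fun m => ?_
  obtain ⟨k, hk⟩ := h''.exists_extend hπ (g ∘ₗ m)
  obtain ⟨l, hl⟩ := LinearMap.exists_lift_of_projective g hfg.surj k
  obtain ⟨κ, hκ⟩ := hfg.exists_lift (m - l ∘ₗ (LinearMap.ker π).subtype)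
    (fun y => by simp [hl, hk])
  obtain ⟨e, he⟩ := h'.exists_extend hπ κ
  exact ⟨l + f ∘ₗ e, fun b => by simp [he, hκ]⟩

lemma ExtOneZero.of_injective_retract (h : ExtOneZero A Y Q) (i : X →ₗ[A] Y) (r : Y →ₗ[A] X)
    (hr : ∀ x, r (i x) = x) : ExtOneZero A X Q := by
  intro B C _ _ _ _ j q hjq m
  obtain ⟨k, hk⟩ := h B C j q hjq (i ∘ₗ m)
  exact ⟨r ∘ₗ k, fun b => by simp [hk, hr]⟩

/-- A class of modules closed under extensions and direct summands. -/
structure IsThick (p : ∀ (X : Type) [AddCommGroup X] [Module A X], Prop) : Prop where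
  zero : ∀ (X : Type) [AddCommGroup X] [Module A X] [Subsingleton X], p X
  ext : ∀ {X' X X'' : Type} [AddCommGroup X'] [Module A X'] [AddCommGroup X] [Module A X]
    [AddCommGroup X''] [Module A X''] (f : X' →ₗ[A] X) (g : X →ₗ[A] X''), IsSES f g →
    p X' → p X'' → p X
  retract : ∀ {X Y : Type} [AddCommGroup X] [Module A X] [AddCommGroup Y] [Module A Y]
    (i : X →ₗ[A] Y) (r : Y →ₗ[A] X), (∀ x, r (i x) = x) → p Y → p X

lemma IsSES.subsingleton_quotient {i : B →ₗ[A] C} {q : C →ₗ[A] Q} (h : IsSES i q)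
    [Subsingleton Q] (g : B →ₗ[A] X) : ∃ k : C →ₗ[A] X, ∀ b, k (i b) = g b := by
  obtain ⟨v, hv⟩ := h.exists_lift LinearMap.id (fun y => Subsingleton.elim _ _)
  exact ⟨g ∘ₗ v, fun b => congrArg g (h.inj (hv (i b)))⟩

lemma isThick_extOneZero (X : Type) [AddCommGroup X] [Module A X] :
    IsThick (fun Q [AddCommGroup Q] [Module A Q] => ExtOneZero A X Q) where
  zero Q _ _ _ := fun B C _ _ _ _ i q hiq g => hiq.subsingleton_quotient g
  ext := by
    intro Q' Q Q'' _ _ _ _ _ _ f g hfg h' h'' B C _ _ _ _ i q hiq m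
    obtain ⟨q', hq'⟩ := hfg.exists_lift (q ∘ₗ (LinearMap.ker (g ∘ₗ q)).subtype)
      (fun y => y.2)
    obtain ⟨k, hk⟩ := h' B (LinearMap.ker (g ∘ₗ q))
      (i.codRestrict _ fun b => by simp [hiq.apply_apply]) q'
      ⟨fun a b hab => hiq.inj (congrArg Subtype.val hab), fun x => by
        obtain ⟨c, hc⟩ := hiq.surj (f x)
        exact ⟨⟨c, by simp [hc, hfg.apply_apply]⟩, hfg.inj (by simp [hq', hc])⟩,
        fun c => by
          rw [← (map_eq_zero_iff f hfg.inj), hq']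
          refine ((hiq.exact c.1).trans ?_)
          exact ⟨fun ⟨b, hb⟩ => ⟨b, Subtype.ext hb⟩, fun ⟨b, hb⟩ => ⟨b, congrArg Subtype.val hb⟩⟩⟩ m
    obtain ⟨e, he⟩ := h''.exists_extend (π := g ∘ₗ q) (hfg.surj.comp hiq.surj) k
    exact ⟨e, fun b => by rw [← hk, ← he]; rfl⟩
  retract := by
    intro Q Q₁ _ _ _ _ s r hr h B C _ _ _ _ i q hiq m
    let E := LinearMap.ker (q ∘ₗ LinearMap.fst A C Q₁ - r ∘ₗ LinearMap.snd A C Q₁)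
    have hE : ∀ x : E, q x.1.1 = r x.1.2 := fun x => sub_eq_zero.1 x.2
    obtain ⟨k, hk⟩ := h B E
      ((LinearMap.inl A C Q₁ ∘ₗ i).codRestrict E fun b => by
        simp [E, hiq.apply_apply])
      (LinearMap.snd A C Q₁ ∘ₗ E.subtype)
      ⟨fun a b hab => hiq.inj (congrArg (fun x : E => x.1.1) hab), fun x => by
        obtain ⟨c, hc⟩ := hiq.surj (r x)
        exact ⟨⟨(c, x), by simp [E, hc]⟩, rfl⟩, fun x => by
        constructor
        · intro hx
          have h0 : x.1.2 = 0 := hx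
          obtain ⟨b, hb⟩ := (hiq.exact x.1.1).1 (by rw [hE, h0, map_zero])
          exact ⟨b, Subtype.ext (Prod.ext hb h0.symm)⟩
        · rintro ⟨b, rfl⟩
          rfl⟩ m
    refine ⟨k ∘ₗ (LinearMap.prod LinearMap.id (s ∘ₗ q)).codRestrict E
      (fun c => by simp [E, hr]), fun b => ?_⟩
    rw [← hk]
    exact congrArg k (Subtype.ext (Prod.ext rfl (show s (q (i b)) = 0 by
      rw [hiq.apply_apply, map_zero])))

lemma isThick_hom_eq_zero (X : Type) [AddCommGroup X] [Module A X] :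
    IsThick (fun Q [AddCommGroup Q] [Module A Q] => ∀ g : Q →ₗ[A] X, g = 0) where
  zero Q _ _ _ g := by
    ext x; rw [Subsingleton.elim x 0]; simp
  ext := by
    intro Q' Q Q'' _ _ _ _ _ _ f g hfg h' h'' u
    obtain ⟨v, hv⟩ := LinearMap.exists_factor_of_surjective g hfg.surj u (fun c hc => by
      obtain ⟨b, rfl⟩ := (hfg.exact c).1 hc
      exact LinearMap.congr_fun (h' (u ∘ₗ f)) b)
    ext x
    rw [← hv, h'' v]; rfl
  retract := by
    intro Q Q₁ _ _ _ _ s r hr h u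
    ext x
    have := LinearMap.congr_fun (h (u ∘ₗ r)) (s x)
    simpa [hr] using this

lemma isThick_lift (φ : X →ₗ[A] Y) :
    IsThick (fun Q [AddCommGroup Q] [Module A Q] => ExtOneZero A X Q ∧
      ∀ g : Q →ₗ[A] Y, ∃ f : Q →ₗ[A] X, ∀ x, φ (f x) = g x) where
  zero Q _ _ _ := ⟨(isThick_extOneZero X).zero Q, fun g => ⟨0, fun x => by
    rw [Subsingleton.elim x 0]; simp⟩⟩
  ext := by
    intro Q' Q Q'' _ _ _ _ _ _ f g hfg h' h''
    refine ⟨(isThick_extOneZero X).ext f g hfg h'.1 h''.1, fun u => ?_⟩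
    obtain ⟨v, hv⟩ := h'.2 (u ∘ₗ f)
    obtain ⟨k, hk⟩ := h''.1 _ _ f g hfg v
    obtain ⟨w, hw⟩ := LinearMap.exists_factor_of_surjective g hfg.surj (u - φ ∘ₗ k)
      (fun c hc => by
        obtain ⟨b, rfl⟩ := (hfg.exact c).1 hc
        simp [hk, hv])
    obtain ⟨w', hw'⟩ := h''.2 w
    exact ⟨k + w' ∘ₗ g, fun x => by simp [hw', hw]⟩
  retract := by
    intro Q Q₁ _ _ _ _ s r hr h
    refine ⟨(isThick_extOneZero X).retract s r hr h.1, fun u => ?_⟩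
    obtain ⟨v, hv⟩ := h.2 (u ∘ₗ r)
    exact ⟨v ∘ₗ s, fun x => by simp [hv, hr]⟩

/-- `M` has a finite filtration by submodules whose factors satisfy `q`. -/
def HasChain (q : ∀ (X : Type) [AddCommGroup X] [Module A X], Prop)
    (M : Type) [AddCommGroup M] [Module A M] : Prop :=
  ∃ (n : ℕ) (c : Fin (n + 1) → Submodule A M), c 0 = ⊥ ∧ c (Fin.last n) = ⊤ ∧ Monotone c ∧
    ∀ i : Fin n, q (↥(c i.succ) ⧸ (Submodule.comap (c i.succ).subtype (c i.castSucc)))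

/-- Modules obtained from zero by successive extensions with cokernel satisfying `q`. -/
inductive Filt (q : ∀ (X : Type) [AddCommGroup X] [Module A X], Prop) :
    ∀ (X : Type) [AddCommGroup X] [Module A X], Prop
  | zero (X : Type) [AddCommGroup X] [Module A X] [Subsingleton X] : Filt q X
  | step {X' X X'' : Type} [AddCommGroup X'] [Module A X'] [AddCommGroup X] [Module A X]
    [AddCommGroup X''] [Module A X''] (f : X' →ₗ[A] X) (g : X →ₗ[A] X'') (h : IsSES f g)
    (h' : Filt q X') (h'' : q X'') : Filt q X

section Filt

variable {q : ∀ (X : Type) [AddCommGroup X] [Module A X], Prop}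

lemma HasChain.filt {M : Type} [AddCommGroup M] [Module A M] (h : HasChain q M) : Filt q M := by
  obtain ⟨n, c, h0, h1, hm, hq⟩ := h
  have key : ∀ i, Filt q (c i) := by
    intro i
    induction i using Fin.induction with
    | zero =>
      have : Subsingleton (c 0) := by rw [h0]; infer_instance
      exact .zero _
    | succ i ih =>
      have hle : c i.castSucc ≤ c i.succ := hm i.castSucc_lt_succ.le
      refine .step (Submodule.inclusion hle) (Submodule.mkQ _)
        ⟨Submodule.inclusion_injective hle, Submodule.mkQ_surjective _, fun x => ?_⟩ ih (hq i)
      simp only [Submodule.mkQ_apply, Submodule.Quotient.mk_eq_zero, Submodule.mem_comap,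
        Submodule.subtype_apply]
      exact ⟨fun hx => ⟨⟨x, hx⟩, rfl⟩, fun ⟨y, hy⟩ => hy ▸ y.2⟩
  have hl := key (Fin.last n)
  generalize c (Fin.last n) = N at h1 hl
  subst h1
  revert hl
  generalize hN : (⊤ : Submodule A M) = N
  intro hl
  cases hl with
  | zero =>
    have : Subsingleton M := ⟨fun a b => congrArg Subtype.val
      (Subsingleton.elim (⟨a, hN ▸ trivial⟩ : N) ⟨b, hN ▸ trivial⟩)⟩
    exact .zero _
  | step f g h h' h'' =>
    subst hN
    refine .step ((⊤ : Submodule A M).subtype ∘ₗ f) (g ∘ₗ Submodule.topEquiv.symm.toLinearMap)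
      ⟨Subtype.val_injective.comp h.inj, h.surj.comp Submodule.topEquiv.symm.surjective,
        fun x => (h.exact (Submodule.topEquiv.symm x)).trans ?_⟩ h' h''
    exact ⟨fun ⟨y, hy⟩ => ⟨y, congrArg Subtype.val hy⟩, fun ⟨y, hy⟩ => ⟨y, Subtype.ext hy⟩⟩

lemma Filt.of_equiv {M N : Type} [AddCommGroup M] [Module A M] [AddCommGroup N] [Module A N]
    (h : Filt q M) (e : M ≃ₗ[A] N) : Filt q N := by
  cases h with
  | zero =>
    have := e.symm.injective.subsingleton
    exact .zero _
  | step f g h h' h'' =>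
    exact .step (e.toLinearMap ∘ₗ f) (g ∘ₗ e.symm.toLinearMap)
      ⟨e.injective.comp h.inj, h.surj.comp e.symm.surjective, fun x =>
        (h.exact (e.symm x)).trans (exists_congr fun _ => (LinearEquiv.eq_symm_apply e))⟩ h' h''

lemma Filt.ext {X' X X'' : Type} [AddCommGroup X'] [Module A X'] [AddCommGroup X] [Module A X]
    [AddCommGroup X''] [Module A X''] (f : X' →ₗ[A] X) (g : X →ₗ[A] X'') (h : IsSES f g)
    (h' : Filt q X') (h'' : Filt q X'') : Filt q X := by
  induction h'' generalizing X with
  | zero =>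
    exact h'.of_equiv (LinearEquiv.ofBijective f ⟨h.inj, fun x =>
      (h.exact x).1 (Subsingleton.elim _ _)⟩)
  | step u v huv _ hq ih =>
    obtain ⟨w, hw⟩ := huv.exists_lift (g ∘ₗ (LinearMap.ker (v ∘ₗ g)).subtype) (fun y => y.2)
    refine .step _ (v ∘ₗ g) (IsSES.ker_subtype _ (huv.surj.comp h.surj))
      (ih (f.codRestrict _ fun b => by simp [h.apply_apply]) w ?_) hq
    refine ⟨fun a b hab => h.inj (congrArg Subtype.val hab), fun x => ?_, fun c => ?_⟩
    · obtain ⟨c, hc⟩ := h.surj (u x)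
      exact ⟨⟨c, by simp [hc, huv.apply_apply]⟩, huv.inj (by simp [hw, hc])⟩
    · rw [← (map_eq_zero_iff u huv.inj), hw]
      refine ((h.exact c.1).trans ?_)
      exact ⟨fun ⟨b, hb⟩ => ⟨b, Subtype.ext hb⟩, fun ⟨b, hb⟩ => ⟨b, congrArg Subtype.val hb⟩⟩

lemma Filt.of_mem {X : Type} [AddCommGroup X] [Module A X] (h : q X) : Filt q X :=
  .step (0 : PUnit →ₗ[A] X) LinearMap.id
    ⟨Function.injective_of_subsingleton _, Function.surjective_id, fun _ =>
      ⟨fun hx => ⟨0, hx.symm⟩, fun ⟨_, hy⟩ => hy.symm⟩⟩ (.zero _) h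

lemma Filt.mono {q' : ∀ (X : Type) [AddCommGroup X] [Module A X], Prop}
    (hqq : ∀ (X : Type) [AddCommGroup X] [Module A X], q X → Filt q' X)
    {X : Type} [AddCommGroup X] [Module A X] (h : Filt q X) : Filt q' X := by
  induction h with
  | zero => exact .zero _
  | step f g h _ h'' ih => exact .ext f g h ih (hqq _ h'')

lemma Filt.of_thick {p : ∀ (X : Type) [AddCommGroup X] [Module A X], Prop} (hp : IsThick p)
    (hqp : ∀ (X : Type) [AddCommGroup X] [Module A X], q X → p X)
    {X : Type} [AddCommGroup X] [Module A X] (h : Filt q X) : p X := by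
  induction h with
  | zero => exact hp.zero _
  | step f g h _ h'' ih => exact hp.ext f g h ih (hqp _ h'')

/-- The top factor of a filtration ending in `range f ≤ ⊤`. -/
noncomputable def factorTopEquiv {X' X X'' : Type} [AddCommGroup X'] [Module A X'] [AddCommGroup X]
    [Module A X] [AddCommGroup X''] [Module A X''] {f : X' →ₗ[A] X} {g : X →ₗ[A] X''}
    (h : IsSES f g) {S T : Submodule A X} (hS : S = LinearMap.range f) (hT : T = ⊤) :
    (T ⧸ S.comap T.subtype) ≃ₗ[A] X'' := by
  subst hS hT
  refine (Submodule.Quotient.equiv _ (LinearMap.ker g) Submodule.topEquiv ?_).trans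
    (g.quotKerEquivOfSurjective h.surj)
  ext x
  simp [h.exact x]

/-- The factors of the image of a filtration under an injective map. -/
noncomputable def factorMapEquiv {X' X X'' : Type} [AddCommGroup X'] [Module A X'] [AddCommGroup X]
    [Module A X] [AddCommGroup X''] [Module A X''] {f : X' →ₗ[A] X} {g : X →ₗ[A] X''}
    (h : IsSES f g) {B C : Submodule A X'} {S T : Submodule A X} (hS : S = B.map f)
    (hT : T = C.map f) : (T ⧸ S.comap T.subtype) ≃ₗ[A] (C ⧸ B.comap C.subtype) := by
  subst hS hT
  refine (Submodule.Quotient.equiv _ _ (Submodule.equivMapOfInjective f h.inj C) ?_).symm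
  ext ⟨x, hx⟩
  obtain ⟨y, hy, rfl⟩ := hx
  constructor
  · rintro ⟨z, hz, hzx⟩
    exact ⟨z, hz, congrArg Subtype.val hzx⟩
  · rintro ⟨z, hz, hzx⟩
    obtain rfl := h.inj hzx
    exact ⟨⟨z, hy⟩, hz, rfl⟩

lemma Filt.hasChain
    (hq : ∀ (X Y : Type) [AddCommGroup X] [Module A X] [AddCommGroup Y] [Module A Y],
      (X ≃ₗ[A] Y) → q Y → q X)
    {X : Type} [AddCommGroup X] [Module A X] (h : Filt q X) : HasChain q X := by
  induction h with
  | zero => exact ⟨0, fun _ => ⊥, rfl, Subsingleton.elim _ _, fun _ _ _ => le_rfl, fun i => i.elim0⟩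
  | step f g h _ h'' ih =>
    obtain ⟨n, c, h0, h1, hm, hc⟩ := ih
    refine ⟨n + 1, Fin.snoc (fun i => (c i).map f) ⊤, ?_, ?_, ?_, ?_⟩
    · rw [← Fin.castSucc_zero, Fin.snoc_castSucc, h0, Submodule.map_bot]
    · rw [Fin.snoc_last]
    · intro i j hij
      induction j using Fin.lastCases with
      | last => simp
      | cast j =>
        induction i using Fin.lastCases with
        | last => exact absurd hij (not_le.2 (Fin.castSucc_lt_last j))
        | cast i =>
          simp only [Fin.snoc_castSucc]
          exact Submodule.map_mono (hm (Fin.castSucc_le_castSucc_iff.1 hij))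
    · intro i
      induction i using Fin.lastCases with
      | last =>
        refine hq _ _ (factorTopEquiv h ?_ ?_) h''
        · rw [Fin.snoc_castSucc, h1, Submodule.map_top]
        · rw [Fin.succ_last, Fin.snoc_last]
      | cast i =>
        refine hq _ _ (factorMapEquiv (B := c i.castSucc) (C := c i.succ) h ?_ ?_) (hc i)
        · rw [Fin.snoc_castSucc]
        · rw [← Fin.castSucc_succ, Fin.snoc_castSucc]

end Filt

lemma isSES_pi_succ (n : ℕ) (X : Type) [AddCommGroup X] [Module A X] :
    IsSES (LinearMap.pi (Fin.cases 0 fun i => LinearMap.proj i) :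
      (Fin n → X) →ₗ[A] (Fin (n + 1) → X)) (LinearMap.proj 0) where
  inj a b hab := funext fun i => by simpa using congrFun hab i.succ
  surj x := ⟨fun _ => x, rfl⟩
  exact x := by
    refine ⟨fun hx => ⟨fun i => x i.succ, funext fun i => ?_⟩, ?_⟩
    · induction i using Fin.cases with
      | zero => exact hx.symm
      | succ i => simp
    · rintro ⟨y, rfl⟩
      simp

lemma Filt.pi {q : ∀ (X : Type) [AddCommGroup X] [Module A X], Prop} {X : Type} [AddCommGroup X]
    [Module A X] (h : Filt q X) (n : ℕ) : Filt q (Fin n → X) := by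
  induction n with
  | zero => exact .zero _
  | succ n ih => exact .ext _ _ (isSES_pi_succ n X) ih h

lemma IsThick.pi {p : ∀ (X : Type) [AddCommGroup X] [Module A X], Prop} (hp : IsThick p)
    {X : Type} [AddCommGroup X] [Module A X] (h : p X) (n : ℕ) : p (Fin n → X) := by
  induction n with
  | zero => exact hp.zero _
  | succ n ih => exact hp.ext _ _ (isSES_pi_succ n X) ih h

end Generic

section ExtVanish

lemma ExtOneZero.of_extVanish {A : Type} [Ring A] {Q X : Type} [AddCommGroup Q] [Module A Q]
    [AddCommGroup X] [Module A X] (h : extVanish A Q X 1) : ExtOneZero A X Q := by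
  let P := projectiveResolution (ModuleCat.of A Q)
  let K := P.complex.linearYonedaObj ℤ (ModuleCat.of A X)
  have h1 : Subsingleton (K.homology 1) := by
    have : Subsingleton _ := h
    exact (P.isoExt (R := ℤ) 1 (ModuleCat.of A X)).toLinearEquiv.symm.injective.subsingleton
  have h2 : K.ExactAt 1 := by
    rw [HomologicalComplex.exactAt_iff_isZero_homology]
    exact ModuleCat.isZero_of_subsingleton _
  rw [HomologicalComplex.exactAt_iff' _ 0 1 2 (by simp) (by simp),
    ShortComplex.moduleCat_exact_iff] at h2
  have hπ' : Function.Surjective (P.π.f 0).hom := by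
    rw [← ModuleCat.epi_iff_surjective]; infer_instance
  have hex' := (ShortComplex.moduleCat_exact_iff _).1 P.exact₀
  let π : P.complex.X 0 →ₗ[A] Q := (P.π.f 0).hom
  have hπ : Function.Surjective π := hπ'
  have hex : ∀ x, π x = 0 → ∃ y, P.complex.d 1 0 y = x := hex'
  have hπd : ∀ y, π (P.complex.d 1 0 y) = 0 := fun y =>
    ShortComplex.moduleCat_zero_apply (ShortComplex.mk _ _ P.complex_d_comp_π_f_zero) y
  have : Module.Projective A (P.complex.X 0) :=
    (IsProjective.iff_projective (P.complex.X 0)).2 (P.projective 0)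
  refine .of_presentation π hπ fun g => ?_
  let d : P.complex.X 1 →ₗ[A] LinearMap.ker π :=
    (P.complex.d 1 0).hom.codRestrict _ hπd
  let z : P.complex.X 1 ⟶ ModuleCat.of A X := ModuleCat.ofHom (g ∘ₗ d)
  obtain ⟨(w : P.complex.X 0 ⟶ ModuleCat.of A X), hw⟩ := h2 z (by
    change P.complex.d 2 1 ≫ z = 0
    ext y
    have hy : d (P.complex.d 2 1 y) = 0 := Subtype.ext (by
      have := P.complex.d_comp_d 2 1 0
      exact congrArg (fun f => f.hom y) this)
    change g (d (P.complex.d 2 1 y)) = 0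
    rw [hy, map_zero])
  replace hw : P.complex.d 1 0 ≫ w = z := hw
  refine ⟨w.hom, fun b => ?_⟩
  obtain ⟨y, hy⟩ := hex b b.2
  have hb : d y = b := Subtype.ext hy
  have := congrArg (fun f => f.hom y) hw
  rw [← hb]
  exact this

end ExtVanish

section FiniteProjective

variable {R : Type} [CommRing R]

lemma finite_projective_of_isSES {X' X X'' : Type} [AddCommGroup X'] [Module R X']
    [AddCommGroup X] [Module R X] [AddCommGroup X''] [Module R X''] {f : X' →ₗ[R] X}
    {g : X →ₗ[R] X''} (h : IsSES f g) (h' : Module.Finite R X' ∧ Module.Projective R X')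
    (h'' : Module.Finite R X'' ∧ Module.Projective R X'') :
    Module.Finite R X ∧ Module.Projective R X := by
  obtain ⟨_, _⟩ := h'
  obtain ⟨_, _⟩ := h''
  obtain ⟨s, hs⟩ := LinearMap.exists_lift_of_projective g h.surj LinearMap.id
  have hb : Function.Bijective (f.coprod s) := by
    constructor
    · rw [injective_iff_map_eq_zero]
      rintro ⟨a, b⟩ hab
      simp only [LinearMap.coprod_apply] at hab
      have hb : b = 0 := by simpa [h.apply_apply, hs] using congrArg g hab
      subst hb
      rw [map_zero, add_zero] at hab
      rw [h.inj (hab.trans (map_zero f).symm)]; rfl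
    · intro x
      obtain ⟨y, hy⟩ := (h.exact (x - s (g x))).1 (by simp [hs])
      exact ⟨(y, g x), by simp [hy]⟩
  let e := LinearEquiv.ofBijective _ hb
  exact ⟨Module.Finite.equiv e, Module.Projective.of_equiv e⟩

lemma finite_projective_of_retract {X Y : Type} [AddCommGroup X] [Module R X]
    [AddCommGroup Y] [Module R Y] (i : X →ₗ[R] Y) (r : Y →ₗ[R] X) (hr : ∀ x, r (i x) = x)
    (h : Module.Finite R Y ∧ Module.Projective R Y) :
    Module.Finite R X ∧ Module.Projective R X := by
  obtain ⟨_, _⟩ := h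
  exact ⟨Module.Finite.of_surjective r fun x => ⟨i x, hr x⟩,
    Module.Projective.of_split i r (LinearMap.ext hr)⟩

variable {A : Type} [Ring A] [Algebra R A]

variable (R A) in
lemma exists_isScalarTower (X : Type) [AddCommGroup X] [Module A X] :
    ∃ (_ : Module R X), IsScalarTower R A X :=
  let := Module.compHom X (algebraMap R A)
  ⟨this, ⟨fun r a x => by
    rw [Algebra.smul_def, mul_smul]; rfl⟩⟩

variable (R A) in
lemma isThick_finite_projective :
    IsThick (fun X [AddCommGroup X] [Module A X] => ∀ [Module R X] [IsScalarTower R A X],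
      Module.Finite R X ∧ Module.Projective R X) where
  zero X _ _ _ := ⟨inferInstance, inferInstance⟩
  ext := by
    intro X' X X'' _ _ _ _ _ _ f g hfg h' h'' _ _
    obtain ⟨_, _⟩ := exists_isScalarTower R A X'
    obtain ⟨_, _⟩ := exists_isScalarTower R A X''
    exact finite_projective_of_isSES (f := f.restrictScalars R) (g := g.restrictScalars R)
      ⟨hfg.inj, hfg.surj, hfg.exact⟩ h' h''
  retract := by
    intro X Y _ _ _ _ i r hr h _ _
    obtain ⟨_, _⟩ := exists_isScalarTower R A Y
    exact finite_projective_of_retract (i.restrictScalars R) (r.restrictScalars R) hr h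

variable (R) in
lemma isThick_hom_finite_projective (X : Type) [AddCommGroup X] [Module R X] [Module A X]
    [IsScalarTower R A X] :
    IsThick (fun Q [AddCommGroup Q] [Module A Q] => ExtOneZero A X Q ∧
      (Module.Finite R (Q →ₗ[A] X) ∧ Module.Projective R (Q →ₗ[A] X))) where
  zero Q _ _ _ := by
    have : Subsingleton (Q →ₗ[A] X) := ⟨fun f g => by
      rw [(isThick_hom_eq_zero X).zero Q f, (isThick_hom_eq_zero X).zero Q g]⟩
    exact ⟨(isThick_extOneZero X).zero Q, inferInstance, inferInstance⟩
  ext := by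
    intro Q' Q Q'' _ _ _ _ _ _ f g hfg h' h''
    refine ⟨(isThick_extOneZero X).ext f g hfg h'.1 h''.1,
      finite_projective_of_isSES (f := LinearMap.lcomp R X g) (g := LinearMap.lcomp R X f)
        ⟨?_, ?_, ?_⟩ h''.2 h'.2⟩
    · intro u v huv
      ext x
      obtain ⟨y, rfl⟩ := hfg.surj x
      exact LinearMap.congr_fun huv y
    · intro u
      obtain ⟨k, hk⟩ := h''.1 _ _ f g hfg u
      exact ⟨k, LinearMap.ext hk⟩
    · intro u
      constructor
      · intro hu
        obtain ⟨v, hv⟩ := LinearMap.exists_factor_of_surjective g hfg.surj u (fun c hc => by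
          obtain ⟨b, rfl⟩ := (hfg.exact c).1 hc
          exact LinearMap.congr_fun hu b)
        exact ⟨v, LinearMap.ext hv⟩
      · rintro ⟨v, rfl⟩
        ext x
        simp [hfg.apply_apply]
  retract := by
    intro Q Q₁ _ _ _ _ i r hr h
    exact ⟨(isThick_extOneZero X).retract i r hr h.1,
      finite_projective_of_retract (LinearMap.lcomp R X r) (LinearMap.lcomp R X i)
        (fun u => by ext x; simp [hr]) h.2⟩

lemma IsThick.pi_fintype {p : ∀ (X : Type) [AddCommGroup X] [Module A X], Prop} (hp : IsThick p)
    {ι : Type} [Fintype ι] (F : ι → Type) [∀ i, AddCommGroup (F i)] [∀ i, Module A (F i)]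
    (h : ∀ i, p (F i)) : p (∀ i, F i) := by
  classical
  let V : Finset ι → Submodule A (∀ i, F i) := fun s => Submodule.pi (sᶜ : Set ι) fun _ => ⊥
  have hV : ∀ s x, x ∈ V s ↔ ∀ i, i ∉ s → x i = 0 := fun s x => by
    simp [V, Submodule.mem_pi]
  have key : ∀ s, p (V s) := by
    intro s
    induction s using Finset.induction with
    | empty =>
      have : Subsingleton (V ∅) := ⟨fun x y => Subtype.ext (funext fun i => by
        rw [(hV ∅ _).1 x.2 i (by simp), (hV ∅ _).1 y.2 i (by simp)])⟩
      exact hp.zero _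
    | insert j s hj ih =>
      have hle : V s ≤ V (insert j s) := fun x hx => (hV _ _).2 fun i hi =>
        (hV _ _).1 hx i fun hi' => hi (Finset.mem_insert_of_mem hi')
      refine hp.ext (Submodule.inclusion hle)
        (LinearMap.proj (R := A) (φ := F) j ∘ₗ (V (insert j s)).subtype)
        ⟨Submodule.inclusion_injective hle, fun y => ?_, fun x => ?_⟩ ih (h j)
      · refine ⟨⟨Pi.single j y, (hV _ _).2 fun i hi => ?_⟩, by simp⟩
        rw [Pi.single_eq_of_ne]
        rintro rfl
        exact hi (Finset.mem_insert_self _ _)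
      · constructor
        · intro hx
          refine ⟨⟨x.1, (hV _ _).2 fun i hi => ?_⟩, rfl⟩
          by_cases hij : i = j
          · subst hij; exact hx
          · exact (hV _ _).1 x.2 i (by simp [hij, hi])
        · rintro ⟨y, rfl⟩
          exact (hV _ _).1 y.2 j hj
  exact hp.retract (LinearMap.id.codRestrict (V Finset.univ) fun x => (hV _ _).2 (by simp))
    (V Finset.univ).subtype (fun _ => rfl) (key Finset.univ)

section Tensor

variable {M U : Type} [AddCommGroup M] [Module R M] [Module A M] [IsScalarTower R A M]
  [AddCommGroup U] [Module R U]

variable (R A M) in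
/-- The `A`-linear map `x ↦ x ⊗ u`. -/
def tmulRight (u : U) : M →ₗ[A] (M ⊗[R] U) where
  toFun x := x ⊗ₜ u
  map_add' x y := TensorProduct.add_tmul x y u
  map_smul' a x := (TensorProduct.smul_tmul' a x u).symm

@[simp] lemma tmulRight_apply (u : U) (x : M) : tmulRight R A M u x = x ⊗ₜ[R] u := rfl

variable (A M) in
/-- The `A`-linear map `x ⊗ u ↦ σ u • x`. -/
def tmulContract (σ : U →ₗ[R] R) : (M ⊗[R] U) →ₗ[A] M :=
  (TensorProduct.AlgebraTensorModule.rid R A M).toLinearMap ∘ₗ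
    TensorProduct.AlgebraTensorModule.map LinearMap.id σ

@[simp] lemma tmulContract_tmul (σ : U →ₗ[R] R) (x : M) (u : U) :
    tmulContract A M σ (x ⊗ₜ u) = σ u • x := by
  simp [tmulContract]

lemma sum_tmulContract {n : ℕ} {b : Fin n → U} {s : Fin n → U →ₗ[R] R}
    (hb : ∀ u, ∑ j, s j u • b j = u) (z : M ⊗[R] U) :
    ∑ j, tmulContract A M (s j) z ⊗ₜ[R] b j = z := by
  induction z with
  | zero => simp
  | add x y hx hy =>
    simp only [map_add, TensorProduct.add_tmul, Finset.sum_add_distrib, hx, hy]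
  | tmul x u =>
    simp only [tmulContract_tmul, TensorProduct.smul_tmul, ← TensorProduct.tmul_sum, hb]

lemma exists_retract_tensor (M : Type) [AddCommGroup M] [Module R M] [Module A M]
    [IsScalarTower R A M] (U : Type) [AddCommGroup U] [Module R U]
    [Module.Finite R U] [Module.Projective R U] :
    ∃ (n : ℕ) (i : (M ⊗[R] U) →ₗ[A] (Fin n → M)) (r : (Fin n → M) →ₗ[A] (M ⊗[R] U)),
      ∀ z, r (i z) = z := by
  obtain ⟨n, b, s, hb⟩ := exists_finite_dual_basis (R := R) U
  exact ⟨n, LinearMap.pi fun j => tmulContract A M (s j),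
    ∑ j, tmulRight R A M (b j) ∘ₗ LinearMap.proj j, fun z => by
      simpa using sum_tmulContract (A := A) hb z⟩

lemma IsThick.tensor {p : ∀ (X : Type) [AddCommGroup X] [Module A X], Prop} (hp : IsThick p)
    (M : Type) [AddCommGroup M] [Module R M] [Module A M] [IsScalarTower R A M] (h : p M)
    (U : Type) [AddCommGroup U] [Module R U] [Module.Finite R U] [Module.Projective R U] :
    p (M ⊗[R] U) := by
  obtain ⟨n, i, r, hr⟩ := exists_retract_tensor (R := R) (A := A) M U
  exact hp.retract i r hr (hp.pi h n)

lemma hom_tensor_eq_zero {Q M : Type} [AddCommGroup Q] [Module A Q] [AddCommGroup M]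
    [Module R M] [Module A M] [IsScalarTower R A M] (h : ∀ f : Q →ₗ[A] M, f = 0)
    [Module.Finite R U] [Module.Projective R U] (f : Q →ₗ[A] (M ⊗[R] U)) : f = 0 := by
  obtain ⟨n, b, s, hb⟩ := exists_finite_dual_basis (R := R) U
  ext x
  rw [← sum_tmulContract (A := A) hb (f x)]
  refine Finset.sum_eq_zero fun j _ => ?_
  have := LinearMap.congr_fun (h (tmulContract A M (s j) ∘ₗ f)) x
  simp only [LinearMap.comp_apply, LinearMap.zero_apply] at this
  rw [this, TensorProduct.zero_tmul]

lemma ExtOneZero.pi {Q M : Type} [AddCommGroup Q] [Module A Q] [AddCommGroup M] [Module A M]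
    (h : ExtOneZero A M Q) (n : ℕ) : ExtOneZero A (Fin n → M) Q := by
  intro B C _ _ _ _ i q hiq m
  choose k hk using fun j => h B C i q hiq (LinearMap.proj j ∘ₗ m)
  exact ⟨LinearMap.pi k, fun b => funext fun j => hk j b⟩

lemma ExtOneZero.tensor {Q M : Type} [AddCommGroup Q] [Module A Q] [AddCommGroup M]
    [Module R M] [Module A M] [IsScalarTower R A M] (h : ExtOneZero A M Q) (U : Type)
    [AddCommGroup U] [Module R U] [Module.Finite R U] [Module.Projective R U] :
    ExtOneZero A (M ⊗[R] U) Q := by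
  obtain ⟨n, i, r, hr⟩ := exists_retract_tensor (R := R) (A := A) M U
  exact (h.pi n).of_injective_retract i r hr

end Tensor

end FiniteProjective

section SplitQH

variable {R : Type} [CommRing R] {A : Type} [Ring A] [Algebra R A]
  {Λ : Type}
  {Δ : Λ → Type} [∀ l, AddCommGroup (Δ l)] [∀ l, Module R (Δ l)]
  [∀ l, Module A (Δ l)] [∀ l, IsScalarTower R A (Δ l)]

lemma TensorFactor.thick {S : Set Λ} {X : Type} [AddCommGroup X] [Module A X]
    (t : TensorFactor R A Λ Δ S X) {p : ∀ (X : Type) [AddCommGroup X] [Module A X], Prop}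
    (hp : IsThick p) (h : ∀ l ∈ S, p (Δ l)) : p X := by
  have := t.fin
  have := t.proj
  exact hp.retract t.iso.toLinearMap t.iso.symm.toLinearMap (fun x => by simp)
    (hp.tensor (Δ t.lam) (h _ t.mem) t.U)

lemma InFilt.thick {S : Set Λ} {M : Type} [AddCommGroup M] [Module A M]
    (hM : InFilt R A Λ Δ S M) {p : ∀ (X : Type) [AddCommGroup X] [Module A X], Prop}
    (hp : IsThick p) (h : ∀ l ∈ S, p (Δ l)) : p M :=
  (HasChain.filt (q := fun X [AddCommGroup X] [Module A X] =>
    Nonempty (TensorFactor R A Λ Δ S X)) hM.2).of_thick hp fun _ _ _ ⟨t⟩ => t.thick hp h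

namespace SplitQH

variable [PartialOrder Λ]

lemma thick_ker (h : SplitQH R A Λ Δ)
    {p : ∀ (X : Type) [AddCommGroup X] [Module A X], Prop} (hp : IsThick p) (l : Λ)
    (hl : ∀ m, l < m → p (Δ m)) : p (LinearMap.ker (h.epi l)) :=
  (h.ker_filt l).thick hp hl

lemma thick_P (h : SplitQH R A Λ Δ)
    {p : ∀ (X : Type) [AddCommGroup X] [Module A X], Prop} (hp : IsThick p) (l : Λ)
    (hl : ∀ m, l ≤ m → p (Δ m)) : p (h.P l) :=
  hp.ext _ _ (IsSES.ker_subtype _ (h.epi_surj l)) (h.thick_ker hp l fun m hm => hl m hm.le)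
    (hl l le_rfl)

lemma thick_self [Fintype Λ] (h : SplitQH R A Λ Δ)
    {p : ∀ (X : Type) [AddCommGroup X] [Module A X], Prop} (hp : IsThick p)
    (hl : ∀ l, p (Δ l)) : p A := by
  obtain ⟨n, i, r, hr⟩ := h.add_gen (ModuleCat.of A A)
    (inferInstanceAs (Module.Finite A A)) (inferInstanceAs (Module.Projective A A))
  exact hp.retract (X := A) i r (fun x => LinearMap.congr_fun hr x)
    (hp.pi (hp.pi_fintype _ fun l => h.thick_P hp l fun m _ => hl m) n)

lemma eq_zero_of_hom [Fintype Λ] (h : SplitQH R A Λ Δ) {X : Type} [AddCommGroup X] [Module A X]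
    (hX : ∀ (l : Λ) (f : Δ l →ₗ[A] X), f = 0) (x : X) : x = 0 := by
  have := h.thick_self (isThick_hom_eq_zero X) hX (LinearMap.toSpanSingleton A X x)
  simpa using LinearMap.congr_fun this 1

lemma surjective_of_hom [Fintype Λ] (h : SplitQH R A Λ Δ)
    {X Y : Type} [AddCommGroup X] [Module A X] [AddCommGroup Y] [Module A Y]
    (φ : X →ₗ[A] Y) (hX : ∀ l, ExtOneZero A X (Δ l))
    (hφ : ∀ l (g : Δ l →ₗ[A] Y), ∃ f : Δ l →ₗ[A] X, ∀ x, φ (f x) = g x) :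
    Function.Surjective φ := fun y => by
  obtain ⟨f, hf⟩ := (h.thick_self (isThick_lift φ) fun l => ⟨hX l, hφ l⟩).2
    (LinearMap.toSpanSingleton A Y y)
  exact ⟨f 1, by simp [hf]⟩

lemma hom_P_eq_zero (h : SplitQH R A Λ Δ) {X : Type} [AddCommGroup X] [Module A X] {l : Λ}
    (hX : ∀ m, l ≤ m → ∀ f : Δ m →ₗ[A] X, f = 0) (f : h.P l →ₗ[A] X) : f = 0 :=
  h.thick_P (isThick_hom_eq_zero X) l hX f

lemma exists_factor_epi (h : SplitQH R A Λ Δ) {X : Type} [AddCommGroup X] [Module A X] {l : Λ}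
    (hX : ∀ m, l < m → ∀ f : Δ m →ₗ[A] X, f = 0) (f : h.P l →ₗ[A] X) :
    ∃ u : Δ l →ₗ[A] X, ∀ p, u (h.epi l p) = f p :=
  LinearMap.exists_factor_of_surjective _ (h.epi_surj l) f fun c hc =>
    LinearMap.congr_fun (h.thick_ker (isThick_hom_eq_zero X) l hX
      (f ∘ₗ (LinearMap.ker (h.epi l)).subtype)) ⟨c, hc⟩

lemma hom_delta_eq_zero (h : SplitQH R A Λ Δ)
    {l m : Λ} (hlm : ¬ l ≤ m) (f : Δ l →ₗ[A] Δ m) : f = 0 :=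
  not_not.1 fun hf => hlm (h.hom_le l m ⟨f, hf⟩)

lemma hom_P_delta_eq_zero (h : SplitQH R A Λ Δ)
    {l m : Λ} (hlm : ¬ l ≤ m) (f : h.P l →ₗ[A] Δ m) : f = 0 :=
  h.hom_P_eq_zero (fun _ hm => h.hom_delta_eq_zero fun h' => hlm (hm.trans h')) f

lemma extOneZero_of_ker (h : SplitQH R A Λ Δ) {X : Type} [AddCommGroup X] [Module A X] (l : Λ)
    (H : ∀ g : LinearMap.ker (h.epi l) →ₗ[A] X,
      ∃ k : h.P l →ₗ[A] X, ∀ b : LinearMap.ker (h.epi l), k b = g b) :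
    ExtOneZero A X (Δ l) :=
  have := h.P_proj l
  .of_presentation _ (h.epi_surj l) H

lemma extOneZero_delta (h : SplitQH R A Λ Δ) {l m : Λ} (hlm : ¬ l < m) : ExtOneZero A (Δ m) (Δ l) :=
  h.extOneZero_of_ker l fun g => ⟨0, fun b => by
    rw [h.thick_ker (isThick_hom_eq_zero (Δ m)) l (fun k hk =>
      h.hom_delta_eq_zero fun h' => hlm (hk.trans_le h')) g]; rfl⟩

lemma finite_projective_hom [Fintype Λ] (h : SplitQH R A Λ Δ)
    {X : Type} [AddCommGroup X] [Module R X] [Module A X]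
    [IsScalarTower R A X] (hX : Module.Finite R X ∧ Module.Projective R X)
    (hE : ∀ l, ExtOneZero A X (Δ l)) (l : Λ) :
    Module.Finite R (Δ l →ₗ[A] X) ∧ Module.Projective R (Δ l →ₗ[A] X) := by
  have hA : Module.Finite R (A →ₗ[A] X) ∧ Module.Projective R (A →ₗ[A] X) := by
    obtain ⟨_, _⟩ := hX
    let e := (LinearMap.ringLmapEquivSelf A R X).symm
    exact ⟨Module.Finite.equiv e, Module.Projective.of_equiv e⟩
  have hthick := isThick_hom_finite_projective R (A := A) X
  induction l using WellFoundedGT.induction with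
  | ind l ih =>
    have hK := h.thick_ker hthick l fun m hm => ⟨hE m, ih m hm⟩
    have := h.P_proj l
    have := h.P_fin l
    obtain ⟨n, f, hf⟩ := Module.Finite.exists_fin' A (h.P l)
    obtain ⟨s, hs⟩ := LinearMap.exists_lift_of_projective f hf LinearMap.id
    have hP := hthick.retract s f hs (hthick.pi ⟨ExtOneZero.of_projective, hA⟩ n)
    obtain ⟨_, _⟩ := hK.2
    have hs := IsSES.ker_subtype _ (h.epi_surj l)
    let res := LinearMap.lcomp R X (LinearMap.ker (h.epi l)).subtype
    have hres : Function.Surjective res := fun u => by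
      obtain ⟨k, hk⟩ := hE l _ _ _ _ hs u
      exact ⟨k, LinearMap.ext hk⟩
    obtain ⟨σ, hσ⟩ := LinearMap.exists_lift_of_projective res hres LinearMap.id
    have hσ' : ∀ u p, h.epi l p = 0 → (u - σ (res u)) p = 0 := fun u p hp => by
      have := LinearMap.congr_fun (hσ (res u)) ⟨p, hp⟩
      rw [LinearMap.sub_apply, sub_eq_zero]
      exact this.symm
    choose r hr using fun u : h.P l →ₗ[A] X =>
      LinearMap.exists_factor_of_surjective _ (h.epi_surj l) (u - σ (res u)) (hσ' u)
    have hepi : ∀ {u v : Δ l →ₗ[A] X}, (∀ p, u (h.epi l p) = v (h.epi l p)) → u = v := by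
      intro u v huv
      ext x
      obtain ⟨p, rfl⟩ := h.epi_surj l x
      exact huv p
    refine finite_projective_of_retract (LinearMap.lcomp R X (h.epi l))
      { toFun := r
        map_add' := fun u v => hepi fun p => by
          simp [hr]; abel
        map_smul' := fun c u => hepi fun p => by
          simp [hr, smul_sub] } (fun u => hepi fun p => ?_) hP.2
    have : res (LinearMap.lcomp R X (h.epi l) u) = 0 := by
      ext x
      have := hs.apply_apply x
      simp only [Submodule.subtype_apply] at this
      simp [res]
    change r _ _ = _
    rw [hr, this]
    simp

end SplitQH

end SplitQH

section Generic

variable {A : Type} [Ring A]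

lemma exists_pushout {C Q M : Type} [AddCommGroup C] [Module A C] [AddCommGroup Q] [Module A Q]
    [AddCommGroup M] [Module A M] (π : C →ₗ[A] Q) (hπ : Function.Surjective π)
    (g : LinearMap.ker π →ₗ[A] M) :
    ∃ (X : Type) (_ : AddCommGroup X) (_ : Module A X) (i : M →ₗ[A] X) (j : C →ₗ[A] X)
      (ρ : X →ₗ[A] Q), IsSES i ρ ∧ ∀ b : LinearMap.ker π, j b = i (g b) := by
  let N := LinearMap.range ((-g).prod (LinearMap.ker π).subtype)
  refine ⟨(M × C) ⧸ N, inferInstance, inferInstance, N.mkQ ∘ₗ LinearMap.inl A M C,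
    N.mkQ ∘ₗ LinearMap.inr A M C, N.liftQ (π ∘ₗ LinearMap.snd A M C) ?_, ⟨?_, ?_, ?_⟩, ?_⟩
  · rintro _ ⟨b, rfl⟩
    simp
  · rw [injective_iff_map_eq_zero]
    intro m hm
    obtain ⟨b, hb⟩ := (Submodule.Quotient.mk_eq_zero N).1 hm
    simp only [LinearMap.prod_apply, Function.prod_apply, LinearMap.inl_apply, Prod.mk.injEq,
      Submodule.subtype_apply, ZeroMemClass.coe_eq_zero] at hb
    rw [← hb.1, hb.2, map_zero]
  · intro q
    obtain ⟨c, rfl⟩ := hπ q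
    exact ⟨N.mkQ (0, c), by simp⟩
  · intro x
    obtain ⟨⟨m, c⟩, rfl⟩ := N.mkQ_surjective x
    constructor
    · intro hc
      have hc : π c = 0 := by simpa using hc
      refine ⟨m + g ⟨c, hc⟩, ?_⟩
      refine ((Submodule.Quotient.eq N).2 ⟨-⟨c, hc⟩, ?_⟩)
      simp
    · rintro ⟨y, hy⟩
      rw [← hy]
      simp
  · intro b
    exact (Submodule.Quotient.eq N).2 ⟨b, by simp⟩

lemma Filt.quotient_range_comp {q : ∀ (X : Type) [AddCommGroup X] [Module A X], Prop}
    {M X X' Y : Type} [AddCommGroup M] [Module A M] [AddCommGroup X] [Module A X]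
    [AddCommGroup X'] [Module A X'] [AddCommGroup Y] [Module A Y] {i : M →ₗ[A] X}
    {j : X →ₗ[A] X'} {ρ : X' →ₗ[A] Y} (hj : IsSES j ρ) (h : Filt q (X ⧸ LinearMap.range i))
    (h' : Filt q Y) : Filt q (X' ⧸ LinearMap.range (j ∘ₗ i)) := by
  have h₁ : LinearMap.range i ≤ (LinearMap.range (j ∘ₗ i)).comap j := by
    rintro _ ⟨m, rfl⟩
    exact ⟨m, rfl⟩
  have h₂ : LinearMap.range (j ∘ₗ i) ≤ LinearMap.ker ρ := by
    rintro _ ⟨m, rfl⟩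
    exact hj.apply_apply _
  refine .ext (Submodule.mapQ _ _ j h₁) (Submodule.liftQ _ ρ h₂) ⟨?_, ?_, ?_⟩ h h'
  · rw [injective_iff_map_eq_zero]
    intro x hx
    obtain ⟨x, rfl⟩ := Submodule.mkQ_surjective _ x
    obtain ⟨m, hm⟩ := (Submodule.Quotient.mk_eq_zero _).1 hx
    exact (Submodule.Quotient.mk_eq_zero _).2 ⟨m, hj.inj hm⟩
  · intro y
    obtain ⟨x, rfl⟩ := hj.surj y
    exact ⟨Submodule.Quotient.mk x, rfl⟩
  · intro x
    obtain ⟨x, rfl⟩ := Submodule.mkQ_surjective _ x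
    constructor
    · intro hx
      obtain ⟨y, rfl⟩ := (hj.exact x).1 hx
      exact ⟨Submodule.Quotient.mk y, rfl⟩
    · rintro ⟨y, hy⟩
      obtain ⟨y, rfl⟩ := Submodule.mkQ_surjective _ y
      rw [← hy]
      exact hj.apply_apply y

end Generic

section SplitQH

variable {R : Type} [CommRing R] {A : Type} [Ring A] [Algebra R A]
  {Λ : Type} [PartialOrder Λ]
  {Δ : Λ → Type} [∀ l, AddCommGroup (Δ l)] [∀ l, Module R (Δ l)]
  [∀ l, Module A (Δ l)] [∀ l, IsScalarTower R A (Δ l)]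

lemma finite_hom_of_isNoetherianRing [IsNoetherianRing R] (K M : Type) [AddCommGroup K]
    [Module A K] [AddCommGroup M] [Module R M] [Module A M] [IsScalarTower R A M]
    [Module.Finite A K] [Module.Finite R M] : Module.Finite R (K →ₗ[A] M) := by
  obtain ⟨n, x, hx⟩ := Module.Finite.exists_fin (R := A) (M := K)
  let ev : (K →ₗ[A] M) →ₗ[R] (Fin n → M) :=
    { toFun := fun u j => u (x j)
      map_add' := fun _ _ => rfl
      map_smul' := fun _ _ => rfl }
  refine Module.Finite.of_injective ev fun u v huv => ?_
  refine LinearMap.ext_on_range hx fun j => congrFun huv j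

namespace SplitQH

lemma exists_universal_extension (h : SplitQH R A Λ Δ)
    [IsNoetherianRing R] (l : Λ) (M : Type) [AddCommGroup M]
    [Module R M] [Module A M] [IsScalarTower R A M] [Module.Finite R M] :
    ∃ (X : Type) (_ : AddCommGroup X) (_ : Module A X) (k : ℕ) (i : M →ₗ[A] X)
      (ρ : X →ₗ[A] (Fin k → Δ l)), IsSES i ρ ∧ ExtOneZero A X (Δ l) := by
  have := (h.ker_filt l).1
  have := h.P_proj l
  have := finite_hom_of_isNoetherianRing (R := R) (A := A) (LinearMap.ker (h.epi l)) M
  obtain ⟨k, g, hg⟩ := Module.Finite.exists_fin (R := R) (M := LinearMap.ker (h.epi l) →ₗ[A] M)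
  let π : (Fin k → h.P l) →ₗ[A] (Fin k → Δ l) := LinearMap.pi fun j => h.epi l ∘ₗ LinearMap.proj j
  have hπ : Function.Surjective π := fun y => by
    choose x hx using fun j => h.epi_surj l (y j)
    exact ⟨x, funext hx⟩
  let κ (j : Fin k) : LinearMap.ker π →ₗ[A] LinearMap.ker (h.epi l) :=
    (LinearMap.proj j ∘ₗ (LinearMap.ker π).subtype).codRestrict _ fun b => congrFun b.2 j
  obtain ⟨X, _, _, i, j, ρ, hiρ, hij⟩ := exists_pushout π hπ (∑ j, g j ∘ₗ κ j)
  obtain ⟨_, _⟩ := exists_isScalarTower R A X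
  let E : Submodule R (LinearMap.ker (h.epi l) →ₗ[A] M) :=
    { carrier := {u | ∃ w : h.P l →ₗ[A] X, ∀ b : LinearMap.ker (h.epi l), w b = i (u b)}
      zero_mem' := ⟨0, fun b => by simp⟩
      add_mem' := fun ⟨w, hw⟩ ⟨w', hw'⟩ => ⟨w + w', fun b => by simp [hw, hw']⟩
      smul_mem' := fun r u ⟨w, hw⟩ => ⟨r • w, fun b => by
        simp only [LinearMap.smul_apply, hw, LinearMap.map_smul_of_tower]⟩ }
  have hE : ∀ u, u ∈ E := by
    have : Submodule.span R (Set.range g) ≤ E := by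
      rw [Submodule.span_le]
      rintro _ ⟨n, rfl⟩
      refine ⟨j ∘ₗ LinearMap.single A (fun _ => (h.P l : Type)) n, fun b => ?_⟩
      have hb : Pi.single n (b : h.P l) ∈ LinearMap.ker π := funext fun m => by
        by_cases hm : m = n
        · subst hm
          simp [π]
        · simp [π, Pi.single_eq_of_ne hm]
      have := hij ⟨_, hb⟩
      simp only [LinearMap.comp_apply, LinearMap.single_apply, LinearMap.sum_apply] at this ⊢
      rw [this, Finset.sum_eq_single n]
      · have : κ n ⟨_, hb⟩ = b := Subtype.ext (Pi.single_eq_same (M := fun _ => (h.P l : Type)) n b)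
        rw [this]
      · intro m _ hm
        have : κ m ⟨_, hb⟩ = 0 := Subtype.ext
          (Pi.single_eq_of_ne (M := fun _ => (h.P l : Type)) hm b)
        rw [this, map_zero]
      · simp
    rw [hg] at this
    exact fun u => this trivial
  refine ⟨X, _, _, k, i, ρ, hiρ, h.extOneZero_of_ker l fun v => ?_⟩
  obtain ⟨w, hw⟩ := ((h.extOneZero_delta (lt_irrefl l)).pi k).exists_extend (h.epi_surj l) (ρ ∘ₗ v)
  obtain ⟨w', hw'⟩ := LinearMap.exists_lift_of_projective ρ hiρ.surj w
  obtain ⟨t, ht⟩ := hiρ.exists_lift (v - w' ∘ₗ (LinearMap.ker (h.epi l)).subtype)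
    (fun b => by simp [hw, hw'])
  obtain ⟨e, he⟩ := hE t
  exact ⟨w' + e, fun b => by simp [he, ht]⟩

lemma finite_projective_of_filt (h : SplitQH R A Λ Δ) {X : Type} [AddCommGroup X] [Module A X]
    (hX : Filt (fun X [AddCommGroup X] [Module A X] =>
      Nonempty (PlainFactor A Λ Δ Set.univ X)) X) [Module R X] [IsScalarTower R A X] :
    Module.Finite R X ∧ Module.Projective R X := by
  refine hX.of_thick (isThick_finite_projective R A) fun X _ _ ⟨t⟩ _ _ => ?_
  have := h.deltaFinR t.lam
  have := h.deltaProjR t.lam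
  let e := t.iso.symm.restrictScalars R
  exact ⟨Module.Finite.equiv e, Module.Projective.of_equiv e⟩

lemma exists_relative_injective (h : SplitQH R A Λ Δ)
    [IsNoetherianRing R] (M : Type) [AddCommGroup M]
    [Module A M] (hM : ∀ [Module R M] [IsScalarTower R A M],
      Module.Finite R M ∧ Module.Projective R M) (S : Finset Λ)
    (hS : ∀ a ∈ S, ∀ b, a ≤ b → b ∈ S) :
    ∃ (X : Type) (_ : AddCommGroup X) (_ : Module A X) (i : M →ₗ[A] X), Function.Injective i ∧
      Filt (fun X [AddCommGroup X] [Module A X] => Nonempty (PlainFactor A Λ Δ Set.univ X))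
        (X ⧸ LinearMap.range i) ∧ ∀ m ∈ S, ExtOneZero A X (Δ m) := by
  classical
  induction S using Finset.strongInduction with
  | H S ih =>
    rcases S.eq_empty_or_nonempty with rfl | hne
    · refine ⟨M, _, _, LinearMap.id, Function.injective_id, ?_, by simp⟩
      have : Subsingleton (M ⧸ LinearMap.range (LinearMap.id : M →ₗ[A] M)) := by
        rw [LinearMap.range_id]
        infer_instance
      exact .zero _
    obtain ⟨l, hl, hmin⟩ := Finset.exists_minimal hne
    have hlt : ∀ m ∈ S, ¬ m < l := fun m hm hml => hml.not_ge (hmin hm hml.le)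
    obtain ⟨X, _, _, i, hi, hF, hE⟩ := ih (S.erase l) (Finset.erase_ssubset hl) fun a ha b hab => by
      rw [Finset.mem_erase] at ha ⊢
      refine ⟨?_, hS a ha.2 b hab⟩
      rintro rfl
      exact hlt a ha.2 (lt_of_le_of_ne hab ha.1)
    obtain ⟨_, _⟩ := exists_isScalarTower R A X
    have := ((isThick_finite_projective R A).ext _ _ (IsSES.range_mkQ i hi) hM
      (h.finite_projective_of_filt hF)).1
    obtain ⟨X', _, _, k, j, ρ, hjρ, hX'⟩ := h.exists_universal_extension l X
    have hl : Filt (fun X [AddCommGroup X] [Module A X] =>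
        Nonempty (PlainFactor A Λ Δ Set.univ X)) (Δ l) :=
      .of_mem ⟨l, trivial, LinearEquiv.refl A (Δ l)⟩
    have hk := hl.pi k
    have hF' := Filt.quotient_range_comp (i := i) hjρ hF hk
    have hinj : Function.Injective (j ∘ₗ i) := hjρ.inj.comp hi
    refine ⟨X', _, _, j ∘ₗ i, hinj, hF', fun m hm => ?_⟩
    by_cases hml : m = l
    · exact hml ▸ hX'
    · exact .of_ses hjρ (hE m (Finset.mem_erase.2 ⟨hml, hm⟩))
        ((h.extOneZero_delta (hlt m hm)).pi k)

end SplitQH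

end SplitQH

section Costandard

variable {R : Type} [CommRing R] {A : Type} [Ring A] [Algebra R A]
  {Λ : Type} [PartialOrder Λ]
  {Δ : Λ → Type} [∀ l, AddCommGroup (Δ l)] [∀ l, Module R (Δ l)]
  [∀ l, Module A (Δ l)] [∀ l, IsScalarTower R A (Δ l)]
  {N : Λ → Type} [∀ l, AddCommGroup (N l)] [∀ l, Module R (N l)]
  [∀ l, Module A (N l)] [∀ l, IsScalarTower R A (N l)]

lemma exists_eq_tmul {Q M U : Type} [AddCommGroup Q] [Module R Q] [Module A Q]
    [IsScalarTower R A Q] [AddCommGroup M] [Module R M] [Module A M] [IsScalarTower R A M]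
    [AddCommGroup U] [Module R U] [Module.Finite R U] [Module.Projective R U]
    {ε : Q →ₗ[A] M} (hε : ∀ f : Q →ₗ[A] M, ∃ r : R, f = r • ε) (f : Q →ₗ[A] (M ⊗[R] U)) :
    ∃ u : U, ∀ x, f x = ε x ⊗ₜ u := by
  obtain ⟨n, b, s, hb⟩ := exists_finite_dual_basis (R := R) U
  choose r hr using fun j => hε (tmulContract A M (s j) ∘ₗ f)
  refine ⟨∑ j, r j • b j, fun x => ?_⟩
  rw [← sum_tmulContract (A := A) hb (f x), TensorProduct.tmul_sum]
  refine Finset.sum_congr rfl fun j _ => ?_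
  have := LinearMap.congr_fun (hr j) x
  simp only [LinearMap.comp_apply, LinearMap.smul_apply] at this
  rw [this, TensorProduct.smul_tmul]

lemma eq_zero_of_tmul_eq_zero {Q M U : Type} [AddCommGroup Q] [Module R Q] [Module A Q]
    [IsScalarTower R A Q] [AddCommGroup M] [Module R M] [Module A M] [IsScalarTower R A M]
    [AddCommGroup U] [Module R U] [Module.Finite R U] [Module.Projective R U]
    {ε : Q →ₗ[A] M} (hε : ∀ r : R, r • ε = 0 → r = 0) {u : U} (hu : ∀ x, ε x ⊗ₜ[R] u = 0) :
    u = 0 := by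
  obtain ⟨n, b, s, hb⟩ := exists_finite_dual_basis (R := R) U
  rw [← hb u]
  refine Finset.sum_eq_zero fun j _ => ?_
  rw [hε (s j u) (LinearMap.ext fun x => ?_), zero_smul]
  simpa using congrArg (tmulContract A M (s j)) (hu x)

lemma IsCostandard.exists_generator (hc : IsCostandard R A Λ Δ N) (l : Λ) :
    ∃ ε : Δ l →ₗ[A] N l, (∀ f : Δ l →ₗ[A] N l, ∃ r : R, f = r • ε) ∧
      ∀ r : R, r • ε = 0 → r = 0 := by
  obtain ⟨e⟩ := hc.2.1 l
  refine ⟨e.symm 1, fun f => ⟨e f, ?_⟩, fun r hr => ?_⟩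
  · rw [← map_smul, smul_eq_mul, mul_one, e.symm_apply_apply]
  · rwa [← map_smul, smul_eq_mul, mul_one, LinearEquiv.map_eq_zero_iff] at hr

lemma SplitQH.exists_eq_smul (h : SplitQH R A Λ Δ) {l : Λ} (f : Δ l →ₗ[A] Δ l) :
    ∃ r : R, ∀ x, f x = r • x := by
  obtain ⟨e⟩ := h.endIso l
  refine ⟨e f, fun x => ?_⟩
  have : f = algebraMap R (Module.End A (Δ l)) (e f) := by
    apply e.injective
    rw [AlgEquiv.commutes]
    rfl
  exact LinearMap.congr_fun this x

lemma IsCostandard.hom_tensor_eq_zero (hc : IsCostandard R A Λ Δ N) {l m : Λ} (hml : m ≠ l)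
    (U : Type) [AddCommGroup U] [Module R U] [Module.Finite R U] [Module.Projective R U]
    (f : Δ m →ₗ[A] (N l ⊗[R] U)) : f = 0 :=
  _root_.hom_tensor_eq_zero (hc.2.2.1 m l hml) f

lemma IsCostandard.extOneZero_tensor (hc : IsCostandard R A Λ Δ N) (l m : Λ)
    (U : Type) [AddCommGroup U] [Module R U] [Module.Finite R U] [Module.Projective R U] :
    ExtOneZero A (N l ⊗[R] U) (Δ m) :=
  (ExtOneZero.of_extVanish (hc.2.2.2 m l 1 one_pos)).tensor U

namespace SplitQH

lemma exists_costandard_projection [Fintype Λ] (h : SplitQH R A Λ Δ) (hc : IsCostandard R A Λ Δ N)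
    {l : Λ} {ε : Δ l →ₗ[A] N l}
    (T : Type) [AddCommGroup T] [Module R T] [Module A T] [IsScalarTower R A T]
    (hT : ∀ m, l < m → ∀ f : Δ m →ₗ[A] T, f = 0)
    [Module.Finite R (Δ l →ₗ[A] T)] [Module.Projective R (Δ l →ₗ[A] T)] :
    ∃ φ : T →ₗ[A] (N l ⊗[R] (Δ l →ₗ[A] T)), ∀ u x, φ (u x) = ε x ⊗ₜ u := by
  have := h.P_fin
  have := h.P_proj
  have hY : ∀ m, l < m → ∀ f : Δ m →ₗ[A] (N l ⊗[R] (Δ l →ₗ[A] T)), f = 0 :=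
    fun m hm => hc.hom_tensor_eq_zero hm.ne' _
  obtain ⟨n, b, s, hb⟩ := exists_finite_dual_basis (R := A) (h.P l)
  let G : Submodule A (T × (N l ⊗[R] (Δ l →ₗ[A] T))) :=
    { carrier := {w | ∀ f : h.P l →ₗ[A] A, ∃ u : Δ l →ₗ[A] T, ∀ p,
        f p • w.1 = u (h.epi l p) ∧ f p • w.2 = ε (h.epi l p) ⊗ₜ u}
      zero_mem' := fun f => ⟨0, fun p => by simp⟩
      add_mem' := fun {w w'} hw hw' f => by
        obtain ⟨u, hu⟩ := hw f
        obtain ⟨u', hu'⟩ := hw' f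
        exact ⟨u + u', fun p => by simp [hu, hu', TensorProduct.tmul_add]⟩
      smul_mem' := fun a w hw f => by
        obtain ⟨u, hu⟩ := hw (LinearMap.toSpanSingleton A A a ∘ₗ f)
        exact ⟨u, fun p => by simpa [mul_smul] using hu p⟩ }
  have hG : ∀ (u : Δ l →ₗ[A] T) (x : Δ l), (u x, ε x ⊗ₜ[R] u) ∈ G := fun u x f => by
    obtain ⟨g, hg⟩ := h.exists_factor_epi (fun m hm => h.hom_delta_eq_zero hm.not_ge)
      (LinearMap.toSpanSingleton A (Δ l) x ∘ₗ f)
    obtain ⟨r, hr⟩ := h.exists_eq_smul g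
    refine ⟨r • u, fun p => ?_⟩
    have hp : f p • x = r • h.epi l p := by
      rw [← hr, hg]
      simp
    constructor
    · rw [← map_smul, hp, LinearMap.map_smul_of_tower, LinearMap.smul_apply]
    · rw [TensorProduct.smul_tmul', ← map_smul, hp, LinearMap.map_smul_of_tower,
        TensorProduct.smul_tmul]
  have hG0 : ∀ y, (0, y) ∈ G → y = 0 := by
    have hann : ∀ y, (0, y) ∈ G → ∀ (f : h.P l →ₗ[A] A) p, f p • y = 0 := fun y hy f p => by
      obtain ⟨u, hu⟩ := hy f
      have hu0 : u = 0 := by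
        ext x
        obtain ⟨q, rfl⟩ := h.epi_surj l x
        simpa using (hu q).1.symm
      simpa [hu0] using (hu p).2
    let Z := G.comap (LinearMap.inr A T (N l ⊗[R] (Δ l →ₗ[A] T)))
    have hZ : ∀ z : Z, z = 0 := h.eq_zero_of_hom fun m g => by
      by_cases hml : m = l
      · subst hml
        ext x
        obtain ⟨p, rfl⟩ := h.epi_surj m x
        conv_lhs => rw [← hb p]
        simp only [map_sum, map_smul, Submodule.coe_sum, Submodule.coe_smul,
          LinearMap.zero_apply, ZeroMemClass.coe_zero]
        exact Finset.sum_eq_zero fun j _ => hann _ (g _).2 _ _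
      · ext x
        exact LinearMap.congr_fun (hc.hom_tensor_eq_zero hml _ (Z.subtype ∘ₗ g)) x
    exact fun y hy => congrArg Subtype.val (hZ ⟨y, hy⟩)
  let e := G.mkQ ∘ₗ LinearMap.inr A T (N l ⊗[R] (Δ l →ₗ[A] T))
  have he : Function.Surjective e := by
    refine h.surjective_of_hom e (fun m => hc.extOneZero_tensor l m _) fun m γ => ?_
    by_cases hlm : l ≤ m
    · obtain ⟨v, hv⟩ := LinearMap.exists_lift_of_projective G.mkQ G.mkQ_surjective (γ ∘ₗ h.epi m)
      rcases eq_or_lt_of_le hlm with rfl | hlm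
      · obtain ⟨τ, hτ⟩ := h.exists_factor_epi hT (LinearMap.fst A _ _ ∘ₗ v)
        obtain ⟨σ, hσ⟩ := h.exists_factor_epi hY
          (LinearMap.snd A _ _ ∘ₗ v - tmulRight R A (N l) τ ∘ₗ ε ∘ₗ h.epi l)
        refine ⟨σ, fun x => ?_⟩
        obtain ⟨p, rfl⟩ := h.epi_surj l x
        have hp := hv p
        rw [LinearMap.comp_apply] at hp
        rw [← hp, hσ, eq_comm]
        refine (Submodule.Quotient.eq G).2 ?_
        convert hG τ (h.epi l p) using 1
        simp only [LinearMap.comp_apply, LinearMap.fst_apply] at hτ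
        ext <;> simp [hτ]
      · refine ⟨0, fun x => ?_⟩
        obtain ⟨p, rfl⟩ := h.epi_surj m x
        have h₁ := LinearMap.congr_fun (h.hom_P_eq_zero
          (fun k hk => hT k (hlm.trans_le hk)) (LinearMap.fst A _ _ ∘ₗ v)) p
        have h₂ := LinearMap.congr_fun (h.hom_P_eq_zero
          (fun k hk => hY k (hlm.trans_le hk)) (LinearMap.snd A _ _ ∘ₗ v)) p
        have hp := hv p
        rw [show v p = 0 from Prod.ext h₁ h₂, map_zero] at hp
        rw [LinearMap.zero_apply, map_zero, hp]
        rfl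
    · refine ⟨0, fun x => ?_⟩
      obtain ⟨w, hw⟩ := G.mkQ_surjective (γ x)
      rw [LinearMap.zero_apply, map_zero, ← hw, eq_comm]
      refine (Submodule.Quotient.mk_eq_zero G).2 fun f => ?_
      have hf : ∀ p, f p • w ∈ G := fun p => (Submodule.Quotient.mk_eq_zero G).1 (by
        change G.mkQ (f p • w) = 0
        have := LinearMap.congr_fun
          (h.hom_P_delta_eq_zero hlm (LinearMap.toSpanSingleton A (Δ m) x ∘ₗ f)) p
        simp only [LinearMap.comp_apply, LinearMap.toSpanSingleton_apply,
          LinearMap.zero_apply] at this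
        rw [map_smul, hw, ← map_smul, this, map_zero])
      choose u hu using fun j => hf (b j) (s j)
      refine ⟨∑ j, u j, fun p => ?_⟩
      have hp : f p = ∑ j, s j p * f (b j) := by
        conv_lhs => rw [← hb p]
        simp
      rw [hp]
      simp only [Finset.sum_smul, mul_smul, LinearMap.sum_apply, TensorProduct.tmul_sum]
      exact ⟨Finset.sum_congr rfl fun j _ => (hu j p).1, Finset.sum_congr rfl fun j _ => (hu j p).2⟩
  have he' : Function.Injective e := (injective_iff_map_eq_zero e).2 fun y hy =>
    hG0 y ((Submodule.Quotient.mk_eq_zero G).1 hy)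
  let e' := LinearEquiv.ofBijective e ⟨he', he⟩
  refine ⟨-(e'.symm.toLinearMap ∘ₗ G.mkQ ∘ₗ LinearMap.inl A _ _), fun u x => ?_⟩
  rw [LinearMap.neg_apply, neg_eq_iff_eq_neg, LinearMap.comp_apply, LinearEquiv.coe_coe,
    LinearEquiv.symm_apply_eq]
  refine (Submodule.Quotient.eq G).2 ?_
  convert hG u x using 1
  ext <;> simp

lemma filt_costandard [Fintype Λ] (h : SplitQH R A Λ Δ) (hc : IsCostandard R A Λ Δ N)
    (S : Finset Λ) (T : Type) [AddCommGroup T] [Module R T] [Module A T]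
    [IsScalarTower R A T] (hE : ∀ m, ExtOneZero A T (Δ m))
    (hP : ∀ m, Module.Finite R (Δ m →ₗ[A] T) ∧ Module.Projective R (Δ m →ₗ[A] T))
    (hS : ∀ m ∉ S, ∀ f : Δ m →ₗ[A] T, f = 0) :
    Filt (fun X [AddCommGroup X] [Module A X] =>
      Nonempty (TensorFactor R A Λ N Set.univ X)) T := by
  classical
  induction S using Finset.strongInduction generalizing T with
  | H S ih =>
    rcases S.eq_empty_or_nonempty with rfl | hne
    · have : Subsingleton T := subsingleton_of_forall_eq 0
        (h.eq_zero_of_hom fun m => hS m (Finset.notMem_empty m))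
      exact .zero T
    obtain ⟨l, hl, hmax⟩ := Finset.exists_maximal hne
    obtain ⟨_, _⟩ := hP l
    obtain ⟨ε, hε, hε'⟩ := hc.exists_generator l
    obtain ⟨φ, hφ⟩ := h.exists_costandard_projection hc (ε := ε) T fun m hm =>
      hS m fun hmS => hm.not_ge (hmax hmS hm.le)
    have hlift : ∀ m (g : Δ m →ₗ[A] (N l ⊗[R] (Δ l →ₗ[A] T))),
        ∃ f : Δ m →ₗ[A] T, ∀ x, φ (f x) = g x := fun m g => by
      by_cases hml : m = l
      · subst hml
        obtain ⟨u, hu⟩ := exists_eq_tmul hε g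
        exact ⟨u, fun x => by rw [hφ, hu]⟩
      · rw [hc.hom_tensor_eq_zero hml _ g]
        exact ⟨0, fun x => by simp⟩
    have hs := IsSES.ker_subtype φ (h.surjective_of_hom φ hE hlift)
    have hl0 : ∀ f : Δ l →ₗ[A] LinearMap.ker φ, f = 0 := fun f => by
      have := eq_zero_of_tmul_eq_zero hε' (u := (LinearMap.ker φ).subtype ∘ₗ f) fun x => by
        rw [← hφ]
        exact (f x).2
      ext x
      exact LinearMap.congr_fun this x
    have hm0 : ∀ m, m ≠ l → ∀ (f : Δ m →ₗ[A] T) x, f x ∈ LinearMap.ker φ := fun m hml f x =>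
      LinearMap.congr_fun (hc.hom_tensor_eq_zero hml _ (φ ∘ₗ f)) x
    refine .step _ _ hs (ih (S.erase l) (Finset.erase_ssubset hl) _
      (fun m => (hE m).of_ses_left hs (hlift m)) (fun m => ?_) fun m hm f => ?_)
      ⟨l, trivial, ModuleCat.of R (Δ l →ₗ[A] T), inferInstance, inferInstance,
        LinearEquiv.refl A _⟩
    · by_cases hml : m = l
      · subst hml
        have : Subsingleton (Δ m →ₗ[A] LinearMap.ker φ) := subsingleton_of_forall_eq 0 hl0
        exact ⟨inferInstance, inferInstance⟩
      · exact finite_projective_of_retract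
          { toFun := fun f => (LinearMap.ker φ).subtype ∘ₗ f
            map_add' := fun _ _ => rfl
            map_smul' := fun _ _ => rfl }
          { toFun := fun f => f.codRestrict _ (hm0 m hml f)
            map_add' := fun _ _ => rfl
            map_smul' := fun _ _ => rfl } (fun _ => rfl) (hP m)
    · by_cases hml : m = l
      · subst hml
        exact hl0 f
      · ext x
        exact LinearMap.congr_fun (hS m (fun hmS => hm (Finset.mem_erase.2 ⟨hml, hmS⟩))
          ((LinearMap.ker φ).subtype ∘ₗ f)) x

end SplitQH

end Costandard

section Factor

variable {R : Type} [CommRing R] {A : Type} [Ring A] [Algebra R A] {Λ : Type}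
  {N : Λ → Type} [∀ l, AddCommGroup (N l)] [∀ l, Module R (N l)]
  [∀ l, Module A (N l)] [∀ l, IsScalarTower R A (N l)]

/-- A factor isomorphic to `F(λ)` is isomorphic to `F(λ) ⊗ R`. -/
def PlainFactor.toTensorFactor {S : Set Λ} {X : Type} [AddCommGroup X] [Module A X]
    (t : PlainFactor A Λ N S X) : TensorFactor R A Λ N S X :=
  ⟨t.lam, t.mem, ModuleCat.of R R, inferInstanceAs (Module.Finite R R),
    inferInstanceAs (Module.Projective R R),
    t.iso.trans (TensorProduct.AlgebraTensorModule.rid R A (N t.lam)).symm⟩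

lemma Filt.inFilt {X : Type} [AddCommGroup X] [Module A X] [Module.Finite A X] {S : Set Λ}
    (hX : Filt (fun X [AddCommGroup X] [Module A X] => Nonempty (TensorFactor R A Λ N S X)) X) :
    InFilt R A Λ N S X :=
  ⟨inferInstance, hX.hasChain fun _ _ _ _ _ _ e ⟨t⟩ =>
    ⟨t.lam, t.mem, t.U, t.fin, t.proj, e.trans t.iso⟩⟩

lemma Filt.inFiltPlain {X : Type} [AddCommGroup X] [Module A X] [Module.Finite A X] {S : Set Λ}
    (hX : Filt (fun X [AddCommGroup X] [Module A X] => Nonempty (PlainFactor A Λ N S X)) X) :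
    InFiltPlain A Λ N S X :=
  ⟨inferInstance, hX.hasChain fun _ _ _ _ _ _ e ⟨t⟩ => ⟨t.lam, t.mem, e.trans t.iso⟩⟩

end Factor

noncomputable section

/-- For each `M ∈ F(Δ̃)` there is a partial tilting module `T_M`
(i.e. `T_M ∈ F(Δ̃) ∩ F(∇̃)`) and a monomorphism `i_M : M → T_M` whose cokernel lies in
`F(Δ)`, the category of modules filtered by standard modules. -/
theorem embedding_into_partial_tilting
    (R : Type) [CommRing R] [IsNoetherianRing R]
    (A : Type) [Ring A] [Algebra R A]
    (Λ : Type) [Fintype Λ] [PartialOrder Λ]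
    (Δ : Λ → Type) [∀ l, AddCommGroup (Δ l)] [∀ l, Module R (Δ l)]
    [∀ l, Module A (Δ l)] [∀ l, IsScalarTower R A (Δ l)]
    (Nb : Λ → Type) [∀ l, AddCommGroup (Nb l)] [∀ l, Module R (Nb l)]
    [∀ l, Module A (Nb l)] [∀ l, IsScalarTower R A (Nb l)]
    (h : SplitQH R A Λ Δ) (hc : IsCostandard R A Λ Δ Nb)
    (M : Type) [AddCommGroup M] [Module A M] (hM : InFilt R A Λ Δ Set.univ M) :
    ∃ T : ModuleCat.{0} A,
      (InFilt R A Λ Δ Set.univ T ∧ InFilt R A Λ Nb Set.univ T) ∧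
      ∃ i : M →ₗ[A] T, Function.Injective i ∧
        InFiltPlain A Λ Δ Set.univ ((T : Type) ⧸ LinearMap.range i) := by
  have hM' : ∀ [Module R M] [IsScalarTower R A M], Module.Finite R M ∧ Module.Projective R M :=
    hM.thick (isThick_finite_projective R A) fun l _ =>
      h.finite_projective_of_filt (.of_mem ⟨l, trivial, LinearEquiv.refl A (Δ l)⟩)
  obtain ⟨X, _, _, i, hi, hF, hE⟩ := h.exists_relative_injective M hM' Finset.univ (by simp)
  replace hE := fun m => hE m (Finset.mem_univ m)
  obtain ⟨_, _⟩ := exists_isScalarTower R A X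
  have hX : Module.Finite R X ∧ Module.Projective R X :=
    (isThick_finite_projective R A).ext _ _ (IsSES.range_mkQ i hi) hM'
      (h.finite_projective_of_filt hF)
  have := hX.1
  have : Module.Finite A X := Module.Finite.of_restrictScalars_finite R A X
  have hXΔ : Filt (fun X [AddCommGroup X] [Module A X] =>
      Nonempty (TensorFactor R A Λ Δ Set.univ X)) X :=
    .ext _ _ (IsSES.range_mkQ i hi) (HasChain.filt hM.2)
      (hF.mono fun _ _ _ ⟨t⟩ => .of_mem ⟨t.toTensorFactor⟩)
  exact ⟨ModuleCat.of A X, ⟨hXΔ.inFilt, (h.filt_costandard hc Finset.univ X hE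
    (h.finite_projective_hom hX hE) fun m hm => absurd (Finset.mem_univ m) hm).inFilt⟩,
    i, hi, hF.inFiltPlain⟩

end
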